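/- arXiv:1509.04970 — 4 statements merged into one kernel-verified Lean document; each statement's English description precedes it below -/
import Mathlib

section
/- Let n > 1 be odd and let K ⊆ M_n(ℂ) be an indecomposable abelian permutation matrix group. If K is not cyclic, then J_K = {I, −I}. -/
open Matrix BigOperators
open scoped Classical

noncomputable section

abbrev Mat (n : ℕ) := Matrix (Fin n) (Fin n) ℂ

/-- A set of matrices is irreducible if the only invariant subspaces are `⊥` and `⊤`. -/
def IrreducibleSet {n : ℕ} (S : Set (Mat n)) : Prop :=
  ∀ W : Submodule ℂ (Fin n → ℂ),
    (∀ A ∈ S, ∀ v ∈ W, A.mulVec v ∈ W) → W = ⊥ ∨ W = ⊤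

/-- All complex eigenvalues are real. -/
def RealSpectrum {n : ℕ} (M : Mat n) : Prop :=
  ∀ z ∈ spectrum ℂ M, z.im = 0

/-- A set of matrices forming a group of invertible matrices under multiplication. -/
def IsMatGroup {n : ℕ} (G : Set (Mat n)) : Prop :=
  (1 : Mat n) ∈ G ∧ (∀ A ∈ G, ∀ B ∈ G, A * B ∈ G) ∧
    ∀ A ∈ G, IsUnit A ∧ A⁻¹ ∈ G

/-- Monomial matrix: exactly one nonzero entry in each row and each column. -/
def IsMonomialMat {n : ℕ} (M : Mat n) : Prop :=
  (∀ i, ∃! j, M i j ≠ 0) ∧ ∀ j, ∃! i, M i j ≠ 0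

/-- Pattern of a matrix: nonzero entries replaced by 1. -/
def patMat {n : ℕ} (M : Mat n) : Mat n :=
  Matrix.of fun i j => if M i j = 0 then 0 else 1

/-- Signed permutation matrix. -/
def IsSignedPermMat {n : ℕ} (M : Mat n) : Prop :=
  IsMonomialMat M ∧ ∀ i j, M i j = 0 ∨ M i j = 1 ∨ M i j = -1

/-- Permutation matrix associated to `σ` (sending `e j` to `e (σ j)`). -/
def permMat {n : ℕ} (σ : Equiv.Perm (Fin n)) : Mat n :=
  Matrix.of fun i j => if i = σ j then 1 else 0

def IsPermMat {n : ℕ} (M : Mat n) : Prop := ∃ σ : Equiv.Perm (Fin n), M = permMat σ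

/-- The cyclic permutation matrix `C_n`, sending `e i` to `e (i+1 mod n)`. -/
def cycMat (n : ℕ) : Mat n :=
  Matrix.of fun i j => if (i : ℕ) = ((j : ℕ) + 1) % n then 1 else 0

/-- The cyclic group `𝒞_n` generated by `C_n`. -/
def cycSet (n : ℕ) : Set (Mat n) := {M | ∃ k : ℕ, M = cycMat n ^ k}

/-- Signed diagonal matrix: member of `D_n(±1)`. -/
def IsSignedDiag {n : ℕ} (M : Mat n) : Prop :=
  ∃ d : Fin n → ℂ, (∀ i, d i = 1 ∨ d i = -1) ∧ M = Matrix.diagonal d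

/-- `avg_G(D) = D · D^G · … · D^(G^(m-1))` where `m = orderOf G` and `D^G = G⁻¹ D G`. -/
def avgMat {n : ℕ} (G D : Mat n) : Mat n :=
  ((List.range (orderOf G)).map fun k => (G ^ k)⁻¹ * D * G ^ k).prod

/-- `J_K = {J ∈ D_n(±1) : avg_G(J) = det(J)·I for all G ∈ K \ {I}}`. -/
def Jset {n : ℕ} (K : Set (Mat n)) : Set (Mat n) :=
  {J | IsSignedDiag J ∧ ∀ G ∈ K, G ≠ 1 → avgMat G J = J.det • (1 : Mat n)}

/-- `J_K^+ = {J ∈ J_K : det J = 1}`. -/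
def JsetPlus {n : ℕ} (K : Set (Mat n)) : Set (Mat n) :=
  {J | J ∈ Jset K ∧ J.det = 1}

/-- Realizable: simultaneously similar to a set of real-entried matrices. -/
def Realizable {n : ℕ} (S : Set (Mat n)) : Prop :=
  ∃ T : Mat n, IsUnit T ∧ ∀ A ∈ S, ∀ i j, ((T⁻¹ * A * T) i j).im = 0

/-- Indecomposable: no common invariant standard subspace except `0` and `ℂ^n`. -/
def IndecomposableSet {n : ℕ} (S : Set (Mat n)) : Prop :=
  ∀ I : Set (Fin n),
    (∀ A ∈ S, ∀ j ∈ I, ∀ i, A i j ≠ 0 → i ∈ I) → I = ∅ ∨ I = Set.univ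

/-- Kronecker product, identified with a matrix over `Fin (m*n)` canonically
(first factor's index is the block index). -/
def kron {m n : ℕ} (A : Mat m) (B : Mat n) : Mat (m * n) :=
  Matrix.reindex finProdFinEquiv finProdFinEquiv (Matrix.kroneckerMap (· * ·) A B)

end

/-!
A non-cyclic finite abelian group contains a copy `V` of `(ℤ/p)²`. Let a function `f` on `V` have
product `D` over every coset of every subgroup of order `p`, and let `x`, `y` generate `V`. Multiply
the values of `f` along the `p` lines through `1` generated by the `xᵐ * y`, `m < p`: these meet
every point off `⟨x⟩` once and the point `1` exactly `p` times. Grouping the former into the `p - 1`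
cosets of `⟨x⟩` other than `⟨x⟩` itself gives `Dᵖ = f 1 ᵖ * Dᵖ⁻¹`, that is `f 1 ᵖ = D`.

For `J ∈ J_K` this applies to `f σ = J_{σ i}` and `D = det J`. An indecomposable abelian `K` acts
regularly, so its order is `n`; hence `p` is odd and the sign `f 1 = J_i` equals `det J`.
-/

section CommGroup

variable {G : Type*} [CommGroup G]

lemma card_ker_powMonoidHom_mul_le [Finite G] (a b : ℕ) :
    Nat.card (powMonoidHom (a * b) : G →* G).ker ≤
      Nat.card (powMonoidHom a : G →* G).ker * Nat.card (powMonoidHom b : G →* G).ker := by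
  have hcomap : (powMonoidHom (a * b) : G →* G).ker =
      (powMonoidHom b : G →* G).ker.comap (powMonoidHom a) := by
    ext g
    simp [MonoidHom.mem_ker, pow_mul]
  have hle : (powMonoidHom a : G →* G).ker ≤ (powMonoidHom (a * b) : G →* G).ker :=
    hcomap ▸ MonoidHom.ker_le_comap _ _
  rw [← Subgroup.relIndex_bot_left, ← Subgroup.relIndex_mul_relIndex ⊥ _ _ bot_le hle,
    Subgroup.relIndex_bot_left, Subgroup.relIndex_ker, hcomap]
  exact Nat.mul_le_mul_left _ (Subgroup.card_le_of_le (Subgroup.map_comap_le _ _))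

lemma isCyclic_of_forall_prime_card_ker_powMonoidHom_le [Finite G]
    (h : ∀ p : ℕ, p.Prime → Nat.card (powMonoidHom p : G →* G).ker ≤ p) : IsCyclic G := by
  have hle (m : ℕ) : m ≠ 0 → Nat.card (powMonoidHom m : G →* G).ker ≤ m := by
    induction m using Nat.recOnMul with
    | zero => simp
    | one => simp
    | prime p hp => exact fun _ => h p hp
    | mul a b ha hb =>
      intro hab
      exact (card_ker_powMonoidHom_mul_le a b).trans
        (Nat.mul_le_mul (ha (left_ne_zero_of_mul hab)) (hb (right_ne_zero_of_mul hab)))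
  have := Fintype.ofFinite G
  refine isCyclic_of_card_pow_eq_one_le fun m hm => ?_
  rw [← Nat.card_eq_finsetCard]
  convert hle m hm.ne' using 1
  exact Nat.card_congr (Equiv.subtypeEquivRight fun g => by simp [MonoidHom.mem_ker])

lemma exists_prime_orderOf_eq_and_notMem_zpowers [Finite G] (h : ¬IsCyclic G) :
    ∃ p : ℕ, p.Prime ∧ ∃ x y : G, orderOf x = p ∧ orderOf y = p ∧ y ∉ Subgroup.zpowers x := by
  obtain ⟨p, hp, hlt⟩ :
      ∃ p : ℕ, p.Prime ∧ p < Nat.card (powMonoidHom p : G →* G).ker := by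
    contrapose! h
    exact isCyclic_of_forall_prime_card_ker_powMonoidHom_le h
  have : Fact p.Prime := ⟨hp⟩
  have hker : (powMonoidHom p : G →* G).ker ≠ ⊥ := by
    rw [← Subgroup.one_lt_card_iff_ne_bot]
    exact hp.one_lt.trans hlt
  obtain ⟨x, hx, hx1⟩ := (Subgroup.bot_or_exists_ne_one _).resolve_left hker
  have hxp : orderOf x = p := orderOf_eq_prime hx hx1
  have hnle : ¬(powMonoidHom p : G →* G).ker ≤ Subgroup.zpowers x := fun hle =>
    (Subgroup.card_le_of_le hle).not_gt (by rwa [Nat.card_zpowers, hxp])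
  obtain ⟨y, hy, hyx⟩ := SetLike.not_le_iff_exists.mp hnle
  have hy1 : y ≠ 1 := by
    rintro rfl
    exact hyx (one_mem _)
  exact ⟨p, hp, x, y, hxp, orderOf_eq_prime hy hy1, hyx⟩

end CommGroup

lemma orderOf_pow_mul_eq_prime {G : Type*} [Group G] {x y : G} (hxy : Commute x y) {p : ℕ}
    [Fact p.Prime] (hx : orderOf x = p) (hy : orderOf y = p) (hyx : y ∉ Subgroup.zpowers x)
    (m : ℕ) : orderOf (x ^ m * y) = p := by
  refine orderOf_eq_prime ?_ fun h => hyx ?_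
  · rw [(hxy.pow_left m).mul_pow, ← hx, pow_right_comm, pow_orderOf_eq_one, hx, ← hy,
      pow_orderOf_eq_one, one_pow, one_mul]
  · rw [eq_inv_of_mul_eq_one_right h]
    exact inv_mem (Subgroup.npow_mem_zpowers x m)

lemma pow_prime_eq_of_prod_coset_eq {G M : Type*} [Group G] [CommGroup M] {p : ℕ} [Fact p.Prime]
    {x y : G} (hxy : Commute x y) (hx : orderOf x = p) (hy : orderOf y = p)
    (hyx : y ∉ Subgroup.zpowers x) (f : G → M) (D : M)
    (hf : ∀ g, orderOf g = p → ∀ a, ∏ k ∈ Finset.range p, f (g ^ k * a) = D) :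
    f 1 ^ p = D := by
  have hp : p.Prime := Fact.out
  have hline (m : ℕ) : ∏ j ∈ Finset.range p, f ((x ^ m * y) ^ j) = D := by
    simpa only [mul_one] using hf _ (orderOf_pow_mul_eq_prime hxy hx hy hyx m) 1
  have hcoset : ∀ j ∈ Finset.Ico 1 p, ∏ m ∈ Finset.range p, f ((x ^ m * y) ^ j) = D := by
    intro j hj
    obtain ⟨hj1, hjp⟩ := Finset.mem_Ico.mp hj
    have hxj : orderOf (x ^ j) = p := by
      rw [Nat.Coprime.orderOf_pow (hx ▸ Nat.coprime_of_lt_prime (by lia) hjp hp), hx]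
    rw [← hf _ hxj (y ^ j)]
    refine Finset.prod_congr rfl fun m _ => ?_
    rw [(hxy.pow_left m).mul_pow, pow_right_comm]
  have hcount : D * D ^ (p - 1) = f 1 ^ p * D ^ (p - 1) := calc
    D * D ^ (p - 1) = ∏ m ∈ Finset.range p, ∏ j ∈ Finset.range p, f ((x ^ m * y) ^ j) := by
      simp only [hline, Finset.prod_const, Finset.card_range, mul_pow_sub_one hp.ne_zero]
    _ = ∏ j ∈ Finset.range p, ∏ m ∈ Finset.range p, f ((x ^ m * y) ^ j) := Finset.prod_comm
    _ = f 1 ^ p * D ^ (p - 1) := by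
      rw [Finset.prod_range_eq_mul_Ico _ hp.pos, Finset.prod_congr rfl hcoset]
      simp only [pow_zero, Finset.prod_const, Finset.card_range, Nat.card_Ico]
  exact (mul_right_cancel hcount).symm

lemma intUnits_pow_eq_self_of_odd (u : ℤˣ) {m : ℕ} (hm : Odd m) : u ^ m = u := by
  rw [Int.units_pow_eq_pow_mod_two, Nat.odd_iff.mp hm, pow_one]

section MulAction

variable {G α : Type*} [CommGroup G] [MulAction G α]

theorem apply_eq_of_prod_pow_smul_eq [Finite G] (hodd : ∀ g : G, Odd (orderOf g))
    (hG : ¬IsCyclic G) (d : α → ℤˣ) (D : ℤˣ)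
    (hd : ∀ g : G, g ≠ 1 → ∀ a, ∏ k ∈ Finset.range (orderOf g), d (g ^ k • a) = D) (a : α) :
    d a = D := by
  obtain ⟨p, hp, x, y, hx, hy, hyx⟩ := exists_prime_orderOf_eq_and_notMem_zpowers hG
  have : Fact p.Prime := ⟨hp⟩
  have hpow : d ((1 : G) • a) ^ p = D := by
    refine pow_prime_eq_of_prod_coset_eq (f := fun g : G => d (g • a)) (.all x y) hx hy hyx D ?_
    rintro g rfl b
    have hg : g ≠ 1 := fun h => hp.ne_one (orderOf_eq_one_iff.mpr h)
    simpa only [mul_smul] using hd g hg (b • a)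
  rwa [intUnits_pow_eq_self_of_odd _ (hx ▸ hodd x), one_smul] at hpow

lemma stabilizer_eq_bot_of_isPretransitive [FaithfulSMul G α] [MulAction.IsPretransitive G α]
    (a : α) : MulAction.stabilizer G a = ⊥ := by
  refine (Subgroup.eq_bot_iff_forall _).mpr fun g hg => ?_
  refine FaithfulSMul.eq_of_smul_eq_smul fun b : α => ?_
  obtain ⟨h, rfl⟩ := MulAction.exists_smul_eq G a b
  rw [smul_comm, MulAction.mem_stabilizer_iff.mp hg, one_smul]

lemma natCard_eq_of_isPretransitive [FaithfulSMul G α] [MulAction.IsPretransitive G α]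
    [Nonempty α] : Nat.card G = Nat.card α := by
  obtain ⟨a⟩ := ‹Nonempty α›
  rw [← MulAction.index_stabilizer_of_transitive G a, stabilizer_eq_bot_of_isPretransitive,
    Subgroup.index_bot]

end MulAction

lemma permMat_eq_permMatrixHom {n : ℕ} (σ : Equiv.Perm (Fin n)) : permMat σ = permMatrixHom σ := by
  ext i j
  simp only [permMat, of_apply, permMatrixHom_apply, PEquiv.toMatrix_apply, Equiv.toPEquiv_apply,
    Option.mem_some_iff, Equiv.Perm.inv_eq_iff_eq]

section PermMatrixHom

variable {ι R : Type*} [DecidableEq ι] [Fintype ι]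

lemma permMatrixHom_injective [NonAssocSemiring R] [Nontrivial R] :
    Function.Injective (permMatrixHom : Equiv.Perm ι →* Matrix ι ι R) :=
  fun _ _ h => inv_injective <| Equiv.ext fun i =>
    Option.some_injective _ (DFunLike.congr_fun (PEquiv.toMatrix_injective h) i)

lemma orderOf_permMatrixHom [Semiring R] [Nontrivial R] (σ : Equiv.Perm ι) :
    orderOf (permMatrixHom σ : Matrix ι ι R) = orderOf σ :=
  orderOf_injective (permMatrixHom (R := R)) permMatrixHom_injective σ

lemma permMatrixHom_inv [CommRing R] (σ : Equiv.Perm ι) :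
    (permMatrixHom σ⁻¹ : Matrix ι ι R) = (permMatrixHom σ)⁻¹ :=
  (inv_eq_left_inv (by rw [← map_mul, inv_mul_cancel, map_one])).symm

lemma permMatrixHom_inv_mul_diagonal_mul [CommRing R] (σ : Equiv.Perm ι) (d : ι → R) :
    (permMatrixHom σ)⁻¹ * diagonal d * permMatrixHom σ = diagonal (d ∘ σ) := by
  rw [← permMatrixHom_inv, permMatrixHom_apply, permMatrixHom_apply, inv_inv,
    PEquiv.toMatrix_toPEquiv_mul, PEquiv.mul_toMatrix_toPEquiv, submatrix_submatrix]
  exact submatrix_diagonal_equiv d σ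

end PermMatrixHom

lemma avgMat_permMatrixHom_diagonal {n : ℕ} (σ : Equiv.Perm (Fin n)) (d : Fin n → ℂ) :
    avgMat (permMatrixHom σ) (diagonal d) =
      diagonal fun i => ∏ k ∈ Finset.range (orderOf σ), d ((σ ^ k) i) := by
  have hprod (m : ℕ) : ((List.range m).map fun k => diagonal (d ∘ ⇑(σ ^ k))).prod =
      diagonal fun i => ∏ k ∈ Finset.range m, d ((σ ^ k) i) := by
    induction m with
    | zero => simp
    | succ m ih => simp [List.range_succ, ih, Finset.prod_range_succ]
  simp only [avgMat, orderOf_permMatrixHom, ← map_pow, permMatrixHom_inv_mul_diagonal_mul,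
    hprod]

section SignDiagonal

variable {n : ℕ}

/-- The element of `D_n(±1)` with diagonal `d`. The signs are taken in `ℤˣ` so that they can be
cancelled. -/
def signDiag (d : Fin n → ℤˣ) : Mat n := diagonal fun i => ((d i : ℤ) : ℂ)

lemma IsSignedDiag.exists_eq_signDiag {J : Mat n} (hJ : IsSignedDiag J) :
    ∃ d : Fin n → ℤˣ, J = signDiag d := by
  obtain ⟨d, hd, rfl⟩ := hJ
  have hlift (i : Fin n) : ∃ u : ℤˣ, d i = ((u : ℤ) : ℂ) := by
    rcases hd i with h | h
    · exact ⟨1, by simp [h]⟩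
    · exact ⟨-1, by simp [h]⟩
  choose u hu using hlift
  exact ⟨u, congrArg diagonal (funext hu)⟩

lemma isSignedDiag_signDiag (d : Fin n → ℤˣ) : IsSignedDiag (signDiag d) := by
  refine ⟨_, fun i => ?_, rfl⟩
  rcases Int.units_eq_one_or (d i) with h | h <;> simp [h]

lemma signDiag_one : signDiag (1 : Fin n → ℤˣ) = 1 := by
  simp [signDiag]

lemma signDiag_neg_one : signDiag (-1 : Fin n → ℤˣ) = -1 := by
  simp [signDiag, ← diagonal_neg]

lemma avgMat_permMatrixHom_signDiag_eq_iff (σ : Equiv.Perm (Fin n)) (d : Fin n → ℤˣ) :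
    avgMat (permMatrixHom σ) (signDiag d) = (signDiag d).det • (1 : Mat n) ↔
      ∀ i, ∏ k ∈ Finset.range (orderOf σ), d ((σ ^ k) i) = ∏ i, d i := by
  rw [signDiag, avgMat_permMatrixHom_diagonal, det_diagonal, smul_one_eq_diagonal,
    diagonal_injective.eq_iff, funext_iff]
  refine forall_congr' fun i => ?_
  rw [← Units.val_inj]
  push_cast
  exact_mod_cast Iff.rfl

end SignDiagonal

section PermGroup

variable {n : ℕ} {K : Set (Mat n)}

/-- The permutations whose matrices lie in the matrix group `K`; for a permutation matrix group
this is `K` itself, seen as a permutation group. -/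
def IsMatGroup.permSubgroup (hK : IsMatGroup K) : Subgroup (Equiv.Perm (Fin n)) where
  carrier := {σ | permMatrixHom σ ∈ K}
  one_mem' := by simpa using hK.1
  mul_mem' {σ τ} hσ hτ := by simpa using hK.2.1 _ hσ _ hτ
  inv_mem' {σ} hσ := Set.mem_ofPred_eq.mpr <| by
    rw [permMatrixHom_inv]
    exact (hK.2.2 _ hσ).2

namespace IsMatGroup

variable (hK : IsMatGroup K)

include hK

lemma exists_permSubgroup_eq (hperm : ∀ A ∈ K, IsPermMat A) {A : Mat n} (hA : A ∈ K) :
    ∃ σ : hK.permSubgroup, permMatrixHom σ.1 = A := by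
  obtain ⟨σ, rfl⟩ := hperm A hA
  rw [permMat_eq_permMatrixHom] at hA ⊢
  exact ⟨⟨σ, hA⟩, rfl⟩

lemma isMulCommutative_permSubgroup (hab : ∀ A ∈ K, ∀ B ∈ K, A * B = B * A) :
    IsMulCommutative hK.permSubgroup :=
  .of_setLike_mul_comm fun σ hσ τ hτ => permMatrixHom_injective (R := ℂ) <| by
    simpa only [map_mul] using hab _ hσ _ hτ

lemma exists_forall_eq_pow_of_isCyclic (hperm : ∀ A ∈ K, IsPermMat A)
    (hcyc : IsCyclic hK.permSubgroup) : ∃ A ∈ K, ∀ B ∈ K, ∃ t : ℕ, B = A ^ t := by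
  obtain ⟨σ, hσ⟩ := IsCyclic.exists_monoid_generator (α := hK.permSubgroup)
  refine ⟨permMatrixHom σ.1, σ.2, fun B hB => ?_⟩
  obtain ⟨τ, rfl⟩ := hK.exists_permSubgroup_eq hperm hB
  obtain ⟨t, rfl⟩ := hσ τ
  exact ⟨t, map_pow _ _ _⟩

lemma isPretransitive_permSubgroup (hperm : ∀ A ∈ K, IsPermMat A) (hind : IndecomposableSet K) :
    MulAction.IsPretransitive hK.permSubgroup (Fin n) := by
  refine .mk fun i j => ?_
  have hinv : ∀ A ∈ K, ∀ k ∈ MulAction.orbit hK.permSubgroup i, ∀ l, A l k ≠ 0 →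
      l ∈ MulAction.orbit hK.permSubgroup i := by
    intro A hA k hk l hl
    obtain ⟨σ, rfl⟩ := hK.exists_permSubgroup_eq hperm hA
    have hlk : l = σ • k := by
      by_contra hne
      exact hl (by rw [← permMat_eq_permMatrixHom]; exact if_neg hne)
    exact hlk ▸ MulAction.mem_orbit_of_mem_orbit σ hk
  have huniv := (hind _ hinv).resolve_left (MulAction.nonempty_orbit i).ne_empty
  exact Set.eq_univ_iff_forall.mp huniv j

lemma signDiag_mem_Jset_iff (hperm : ∀ A ∈ K, IsPermMat A) (d : Fin n → ℤˣ) :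
    signDiag d ∈ Jset K ↔ ∀ σ : hK.permSubgroup, σ ≠ 1 → ∀ i,
      ∏ k ∈ Finset.range (orderOf σ), d (σ ^ k • i) = ∏ i, d i := by
  have hne (σ : hK.permSubgroup) : (permMatrixHom σ.1 : Mat n) ≠ 1 ↔ σ ≠ 1 := by
    rw [Ne, map_eq_one_iff _ permMatrixHom_injective, OneMemClass.coe_eq_one]
  have havg (σ : hK.permSubgroup) :
      avgMat (permMatrixHom σ.1) (signDiag d) = (signDiag d).det • (1 : Mat n) ↔
        ∀ i, ∏ k ∈ Finset.range (orderOf σ), d (σ ^ k • i) = ∏ i, d i := by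
    rw [avgMat_permMatrixHom_signDiag_eq_iff, Subgroup.orderOf_coe]
    rfl
  refine ⟨fun h σ hσ => (havg σ).mp (h.2 _ σ.2 ((hne σ).mpr hσ)),
    fun h => ⟨isSignedDiag_signDiag d, fun A hA hA1 => ?_⟩⟩
  obtain ⟨σ, rfl⟩ := hK.exists_permSubgroup_eq hperm hA
  exact (havg σ).mpr (h σ ((hne σ).mp hA1))

lemma odd_orderOf_permSubgroup (hord : ∀ A ∈ K, Odd (orderOf A)) (σ : hK.permSubgroup) :
    Odd (orderOf σ) := by
  rw [← Subgroup.orderOf_coe, ← orderOf_permMatrixHom (R := ℂ)]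
  exact hord _ σ.2

open scoped IsMulCommutative in
lemma orderOf_dvd_of_indecomposableSet (hperm : ∀ A ∈ K, IsPermMat A)
    (hab : ∀ A ∈ K, ∀ B ∈ K, A * B = B * A) (hind : IndecomposableSet K) {A : Mat n} (hA : A ∈ K) :
    orderOf A ∣ n := by
  obtain rfl | hn := Nat.eq_zero_or_pos n
  · exact dvd_zero _
  have : Nonempty (Fin n) := ⟨⟨0, hn⟩⟩
  have := hK.isMulCommutative_permSubgroup hab
  have := hK.isPretransitive_permSubgroup hperm hind
  obtain ⟨σ, rfl⟩ := hK.exists_permSubgroup_eq hperm hA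
  have hcard : Nat.card hK.permSubgroup = n := by
    rw [natCard_eq_of_isPretransitive (α := Fin n), Nat.card_fin]
  rw [orderOf_permMatrixHom, Subgroup.orderOf_coe]
  exact (orderOf_dvd_natCard σ).trans hcard.dvd

lemma signDiag_const_mem_Jset (hodd : Odd n) (hperm : ∀ A ∈ K, IsPermMat A)
    (hord : ∀ A ∈ K, Odd (orderOf A)) (u : ℤˣ) : signDiag (fun _ => u) ∈ Jset K := by
  refine (hK.signDiag_mem_Jset_iff hperm _).mpr fun σ _ _ => ?_
  have hσ := hK.odd_orderOf_permSubgroup hord σ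
  simp only [Finset.prod_const, Finset.card_range, Finset.card_univ, Fintype.card_fin,
    intUnits_pow_eq_self_of_odd _ hσ, intUnits_pow_eq_self_of_odd _ hodd]

open scoped IsMulCommutative in
lemma eq_const_of_signDiag_mem_Jset (hperm : ∀ A ∈ K, IsPermMat A)
    (hab : ∀ A ∈ K, ∀ B ∈ K, A * B = B * A) (hord : ∀ A ∈ K, Odd (orderOf A))
    (hnotcyc : ¬∃ A ∈ K, ∀ B ∈ K, ∃ t : ℕ, B = A ^ t) {d : Fin n → ℤˣ}
    (hd : signDiag d ∈ Jset K) : d = fun _ => ∏ i, d i := by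
  have := hK.isMulCommutative_permSubgroup hab
  exact funext <| apply_eq_of_prod_pow_smul_eq (hK.odd_orderOf_permSubgroup hord)
    (mt (hK.exists_forall_eq_pow_of_isCyclic hperm) hnotcyc) d _
    ((hK.signDiag_mem_Jset_iff hperm d).mp hd)

end IsMatGroup

end PermGroup

theorem stmt12_general {n : ℕ} (hodd : Odd n) (K : Set (Mat n))
    (hgrp : IsMatGroup K) (hperm : ∀ M ∈ K, IsPermMat M)
    (hab : ∀ A ∈ K, ∀ B ∈ K, A * B = B * A)
    (hord : ∀ A ∈ K, Odd (orderOf A))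
    (hnotcyc : ¬ ∃ A ∈ K, ∀ B ∈ K, ∃ t : ℕ, B = A ^ t) :
    Jset K = {(1 : Mat n), -(1 : Mat n)} := by
  have hconst (u : ℤˣ) := hgrp.signDiag_const_mem_Jset hodd hperm hord u
  refine Set.Subset.antisymm (fun J hJ => ?_) ?_
  · obtain ⟨d, rfl⟩ := hJ.1.exists_eq_signDiag
    have hd : d = fun _ => ∏ i, d i :=
      hgrp.eq_const_of_signDiag_mem_Jset hperm hab hord hnotcyc hJ
    rcases Int.units_eq_one_or (∏ i, d i) with h | h
    · exact .inl (by rw [hd, h]; exact signDiag_one)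
    · exact .inr (by rw [hd, h]; exact signDiag_neg_one)
  · rintro J (rfl | rfl)
    · exact signDiag_one (n := n) ▸ hconst 1
    · exact signDiag_neg_one (n := n) ▸ hconst (-1)

/-- If an indecomposable abelian permutation group `K ⊆ M_n(ℂ)`
(`n > 1` odd) is not cyclic, then `J_K = {I, -I}`. -/
theorem stmt12 {n : ℕ} (hodd : Odd n) (hn : 1 < n) (K : Set (Mat n))
    (hgrp : IsMatGroup K) (hperm : ∀ M ∈ K, IsPermMat M)
    (hab : ∀ A ∈ K, ∀ B ∈ K, A * B = B * A)
    (hind : IndecomposableSet K)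
    (hnotcyc : ¬ ∃ A ∈ K, ∀ B ∈ K, ∃ t : ℕ, B = A ^ t) :
    Jset K = {(1 : Mat n), -(1 : Mat n)} := by
  exact stmt12_general hodd K hgrp hperm hab (fun A hA => hodd.of_dvd_nat
    (hgrp.orderOf_dvd_of_indecomposableSet hperm hab hind hA)) hnotcyc
end

section
/- Let G ⊆ M_n(ℂ) be an irreducible group of matrices. If the commutator subgroup [G,G] is diagonalizable (i.e., simultaneously similar to a group of diagonal matrices), then G is simultaneously similar to a group of monomial matrices with commutative pattern. -/
open Matrix BigOperators
open scoped Classical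

/-!
Since `[G, G]` is abelian, there is a self-centralizing subgroup `S` with `[G, G] ≤ S ≤ G`; it is
abelian and normal, with abelian quotient. It has a common eigenvector `v`, of weight `χ` say; then
`g v` has the conjugate weight, and by irreducibility the orbit `G v` spans. If `k` fixes `χ`, then
`k v` and `v` have the same weight, and since `G ⧸ S` is abelian so do `k g v` and `g v`: thus `k`
commutes with `S` on a spanning set, and `k ∈ S`. Hence different cosets of `S` give different
weights, so choosing one `g` in each coset makes the vectors `g v` a basis, which `G` permutes up
to scalars through left translation on `G ⧸ S`.
-/

open Module

section Group

variable {G : Type*} [Group G]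

theorem exists_le_centralizer_eq_self (A : Subgroup G) [IsMulCommutative A] :
    ∃ S : Subgroup G, A ≤ S ∧ Subgroup.centralizer (S : Set G) = S := by
  obtain ⟨s, hAs, hs⟩ := zorn_subset_nonempty {s : Set G | s.Pairwise Commute}
    (fun c hc hchain _ ↦ ⟨⋃₀ c, (Set.pairwise_sUnion hchain.directedOn).2 hc,
      fun _ ↦ Set.subset_sUnion_of_mem⟩)
    A (fun a ha b hb _ ↦ A.le_centralizer hb a ha)
  have hcent : (Subgroup.centralizer s : Set G) = s := by
    refine Set.Subset.antisymm (fun g hg ↦ ?_) fun g hg a ha ↦ hs.prop.of_refl ha hg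
    refine hs.le_of_ge (y := insert g s) ?_ (Set.subset_insert g s) (Set.mem_insert g s)
    exact hs.prop.insert_of_symm fun a ha _ ↦ (hg a ha).symm
  exact ⟨Subgroup.centralizer s, hAs.trans hcent.ge, by rw [hcent]⟩

theorem commute_toPermHom_quotient (S : Subgroup G) [S.Normal] [IsMulCommutative (G ⧸ S)]
    (a b : G) : Commute (MulAction.toPermHom G (G ⧸ S) a) (MulAction.toPermHom G (G ⧸ S) b) :=
  Equiv.ext fun q ↦ q.induction_on fun g ↦ show (a : G ⧸ S) * (b * g) = b * (a * g) by
    rw [← mul_assoc, mul_comm' (a : G ⧸ S), mul_assoc]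

end Group

theorem exists_ne_zero_forall_smul_eq_smul (K A V : Type*) [Field K] [IsAlgClosed K] [Ring A]
    [Algebra K A] [IsMulCommutative A] [AddCommGroup V] [Module K V] [Module A V]
    [IsScalarTower K A V] [FiniteDimensional K V] [Nontrivial V] :
    ∃ v : V, v ≠ 0 ∧ ∀ a : A, ∃ c : K, a • v = c • v := by
  have : IsArtinian A V := isArtinian_of_tower K inferInstance
  obtain ⟨W, hW⟩ := IsAtomic.exists_atom (Submodule A V)
  have : IsSimpleModule A W := isSimpleModule_iff_isAtom.2 hW
  have : FiniteDimensional K W := inferInstanceAs (FiniteDimensional K (W.restrictScalars K))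
  have hdim : finrank K W = 1 := IsSimpleModule.finrank_eq_one_of_isMulCommutative A W K
  obtain ⟨w, hw, hspan⟩ := finrank_eq_one_iff'.1 hdim
  refine ⟨w, by simpa using hw, fun a ↦ ?_⟩
  obtain ⟨c, hc⟩ := hspan (a • w)
  exact ⟨c, congrArg Subtype.val hc.symm⟩

section WeightSpace

variable {R G V : Type*} [CommRing R] [Group G] [AddCommGroup V] [Module R V]

/-- The weight space of the subgroup `S` in the representation `ρ`: the common eigenvectors of `S`
with eigenvalues prescribed by `χ`, which is any function and need not be a character. -/
def weightSpace (ρ : Representation R G V) (S : Subgroup G) (χ : S → R) : Submodule R V :=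
  ⨅ a : S, End.eigenspace (ρ a) (χ a)

variable {ρ : Representation R G V} {S : Subgroup G} {χ : S → R} {v : V}

theorem mem_weightSpace : v ∈ weightSpace ρ S χ ↔ ∀ a : S, ρ a v = χ a • v := by
  simp [weightSpace]

theorem exists_apply_eq_smul_of_mk_eq (hv : v ∈ weightSpace ρ S χ) {g h : G}
    (hgh : (g : G ⧸ S) = h) : ∃ c : R, ρ g v = c • ρ h v := by
  have hS : h⁻¹ * g ∈ S := QuotientGroup.eq.1 hgh.symm
  refine ⟨χ ⟨_, hS⟩, ?_⟩
  rw [← map_smul, ← mem_weightSpace.1 hv ⟨_, hS⟩, ← End.mul_apply, ← map_mul, mul_inv_cancel_left]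

theorem iSupIndep_weightSpace [IsDomain R] [IsTorsionFree R V] [IsMulCommutative S] :
    iSupIndep (weightSpace ρ S) := by
  refine (End.independent_iInf_maxGenEigenspace_of_forall_mapsTo (fun a : S ↦ ρ a)
    fun a b ↦ ?_).mono fun χ ↦ iInf_mono fun a ↦ End.eigenspace_le_maxGenEigenspace
  have hba : Commute b a := mul_comm' b a
  exact End.mapsTo_maxGenEigenspace_of_comm (hba.map (ρ.comp S.subtype))

theorem apply_mem_weightSpace [S.Normal] (hv : v ∈ weightSpace ρ S χ) (g : G) :
    ρ g v ∈ weightSpace ρ S (χ ∘ MulAut.conjNormal g⁻¹) := by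
  refine mem_weightSpace.2 fun a ↦ ?_
  have hag : (a : G) * g = g * (MulAut.conjNormal g⁻¹ a : S) := by simp [mul_assoc]
  calc ρ a (ρ g v) = ρ g (ρ (MulAut.conjNormal g⁻¹ a : S) v) := by
        simp only [← End.mul_apply, ← map_mul, hag]
    _ = χ (MulAut.conjNormal g⁻¹ a) • ρ g v := by rw [mem_weightSpace.1 hv, map_smul]

theorem mem_of_apply_mem_weightSpace (hρ : Function.Injective ρ) (hGS : commutator G ≤ S)
    (hS : Subgroup.centralizer (S : Set G) ≤ S)
    (hspan : Submodule.span R (Set.range fun g ↦ ρ g v) = ⊤) (hv : v ∈ weightSpace ρ S χ) {k : G}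
    (hk : ρ k v ∈ weightSpace ρ S χ) : k ∈ S := by
  have : S.Normal := .of_commutator_le G hGS
  have : IsMulCommutative (G ⧸ S) := Subgroup.Normal.quotient_commutative_iff_commutator_le.2 hGS
  refine hS <| Subgroup.mem_centralizer_iff.2 fun a ha ↦
    hρ <| LinearMap.ext_on_range hspan fun x ↦ ?_
  have hx := mem_weightSpace.1 (apply_mem_weightSpace hv x) ⟨a, ha⟩
  have hkx : ρ (k * x) v ∈ weightSpace ρ S (χ ∘ MulAut.conjNormal x⁻¹) := by
    have hcoset : ((k * x : G) : G ⧸ S) = ↑(x * k) := mul_comm' (k : G ⧸ S) x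
    obtain ⟨c, hc⟩ := exists_apply_eq_smul_of_mk_eq hv hcoset
    rw [hc, map_mul, End.mul_apply]
    exact Submodule.smul_mem _ c (apply_mem_weightSpace hk x)
  calc ρ (a * k) (ρ x v) = ρ a (ρ (k * x) v) := by simp
    _ = ρ k (ρ a (ρ x v)) := by rw [mem_weightSpace.1 hkx ⟨a, ha⟩, hx]; simp
    _ = ρ (k * a) (ρ x v) := by simp

theorem injective_comp_conjNormal_out_inv [S.Normal] (hv : v ∈ weightSpace ρ S χ)
    (hstab : ∀ k, ρ k v ∈ weightSpace ρ S χ → k ∈ S) :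
    Function.Injective fun q : G ⧸ S ↦ χ ∘ MulAut.conjNormal q.out⁻¹ := by
  intro q r hqr
  rw [← q.out_eq', ← r.out_eq', eq_comm, QuotientGroup.eq]
  refine hstab _ ?_
  have hrq := apply_mem_weightSpace (apply_mem_weightSpace hv q.out) r.out⁻¹
  simp only at hqr
  rw [hqr] at hrq
  simpa [Function.comp_assoc, ← MulAut.coe_mul, ← MulAut.inv_def] using hrq

end WeightSpace

section Irreducible

variable {K G V : Type*} [Field K] [Group G] [AddCommGroup V] [Module K V]
  (ρ : Representation K G V)

theorem span_range_apply_eq_top [ρ.IsIrreducible] {v : V} (hv : v ≠ 0) :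
    Submodule.span K (Set.range fun g ↦ ρ g v) = ⊤ := by
  have hinv (h : G) : Submodule.span K (Set.range fun g ↦ ρ g v) ≤
      (Submodule.span K (Set.range fun g ↦ ρ g v)).comap (ρ h) := by
    rw [Submodule.span_le]
    rintro _ ⟨g, rfl⟩
    exact Submodule.subset_span ⟨h * g, by simp⟩
  let W : Subrepresentation ρ := ⟨_, fun h _ hx ↦ hinv h hx⟩
  have hvW : v ∈ W.toSubmodule := Submodule.subset_span ⟨1, by simp⟩
  have hW : W ≠ ⊥ := fun h ↦ hv (by rw [h] at hvW; exact hvW)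
  exact congrArg Subrepresentation.toSubmodule ((eq_bot_or_eq_top W).resolve_left hW)

variable [IsAlgClosed K] [FiniteDimensional K V]

theorem exists_mem_weightSpace_ne_zero [Nontrivial V] (S : Subgroup G) [IsMulCommutative S] :
    ∃ (χ : S → K) (v : V), v ∈ weightSpace ρ S χ ∧ v ≠ 0 := by
  let A := Algebra.adjoin K (Set.range fun a : S ↦ ρ a)
  have : IsMulCommutative A := Algebra.isMulCommutative_adjoin K <| by
    rintro _ ⟨a, rfl⟩ _ ⟨b, rfl⟩
    have hab : Commute a b := mul_comm' a b
    exact hab.map (ρ.comp S.subtype)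
  obtain ⟨v, hv, h⟩ := exists_ne_zero_forall_smul_eq_smul K A V
  choose χ hχ using h
  exact ⟨fun a ↦ χ ⟨ρ a, Algebra.subset_adjoin ⟨a, rfl⟩⟩, v,
    mem_weightSpace.2 fun a ↦ hχ ⟨ρ a, _⟩, hv⟩

theorem exists_basis_quotient [ρ.IsIrreducible] (hρ : Function.Injective ρ)
    [IsMulCommutative (commutator G)] :
    ∃ (S : Subgroup G) (b : Basis (G ⧸ S) K V), commutator G ≤ S ∧
      ∀ g q, ∃ c : K, ρ g (b q) = c • b (g • q) := by
  obtain ⟨S, hGS, hS⟩ := exists_le_centralizer_eq_self (commutator G)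
  have : S.Normal := .of_commutator_le G hGS
  have : IsMulCommutative S := Subgroup.le_centralizer_iff_isMulCommutative.1 hS.ge
  have : Nontrivial V := IsSimpleModule.nontrivial (MonoidAlgebra K G) ρ.asModule
  obtain ⟨χ, v, hv, hv0⟩ := exists_mem_weightSpace_ne_zero ρ S
  have horbit := span_range_apply_eq_top ρ hv0
  have hweights : Function.Injective fun q : G ⧸ S ↦ χ ∘ MulAut.conjNormal q.out⁻¹ :=
    injective_comp_conjNormal_out_inv hv fun _ ↦
      mem_of_apply_mem_weightSpace hρ hGS hS.le horbit hv
  have hli : LinearIndependent K fun q : G ⧸ S ↦ ρ q.out v :=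
    (iSupIndep_weightSpace.comp hweights).linearIndependent _
      (fun q ↦ apply_mem_weightSpace hv q.out)
      fun q ↦ (map_ne_zero_iff _ (ρ.apply_bijective q.out).injective).2 hv0
  have hspan : ⊤ ≤ Submodule.span K (Set.range fun q : G ⧸ S ↦ ρ q.out v) := by
    rw [← horbit, Submodule.span_le]
    rintro _ ⟨g, rfl⟩
    obtain ⟨c, hc⟩ := exists_apply_eq_smul_of_mk_eq hv (QuotientGroup.out_eq' (g : G ⧸ S)).symm
    simp only [hc]
    exact Submodule.smul_mem _ c (Submodule.subset_span ⟨g, rfl⟩)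
  refine ⟨S, Basis.mk hli hspan, hGS, fun g q ↦ ?_⟩
  have hcoset : ((g * q.out : G) : G ⧸ S) = (g • q).out := by
    simp [← MulAction.Quotient.coe_smul_out]
  obtain ⟨c, hc⟩ := exists_apply_eq_smul_of_mk_eq hv hcoset
  exact ⟨c, by simpa using hc⟩

end Irreducible

section CommRing

variable {R ι : Type*} [CommRing R] [Fintype ι] [DecidableEq ι]

theorem inv_mul_mul_basis_toMatrix (b : Basis ι R (ι → R)) (A : Matrix ι ι R) :
    ((Pi.basisFun R ι).toMatrix b)⁻¹ * A * (Pi.basisFun R ι).toMatrix b =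
      LinearMap.toMatrix b b A.toLin' := by
  rw [Matrix.inv_eq_left_inv (b.toMatrix_mul_toMatrix_flip (Pi.basisFun R ι)),
    ← basis_toMatrix_mul_linearMap_toMatrix_mul_basis_toMatrix b (Pi.basisFun R ι) b
      (Pi.basisFun R ι), LinearMap.toMatrix_eq_toMatrix', LinearMap.toMatrix'_toLin']

theorem toMatrix_apply_ne_zero_iff [Nontrivial R] {V : Type*} [AddCommGroup V] [Module R V]
    (b : Basis ι R V) {f : End R V} (hf : Function.Injective f) {i j k : ι} {c : R}
    (h : f (b j) = c • b k) : LinearMap.toMatrix b b f i j ≠ 0 ↔ i = k := by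
  have hc : c ≠ 0 := by
    rintro rfl
    exact b.ne_zero j (hf (by simp [h]))
  simp [LinearMap.toMatrix_apply, h, hc, Finsupp.single_apply, eq_comm]

theorem isMulCommutative_of_isDiag_conj {G : Subgroup (Matrix ι ι R)ˣ} {T : Matrix ι ι R}
    (hT : IsUnit T) (hG : ∀ A ∈ G, (T⁻¹ * (A : Matrix ι ι R) * T).IsDiag) :
    IsMulCommutative G := by
  obtain ⟨T, rfl⟩ := hT
  have hdiag (A : G) :
      ∃ d, ((MulAut.conj T⁻¹ A : (Matrix ι ι R)ˣ) : Matrix ι ι R) = diagonal d :=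
    ⟨_, by simpa using (hG A A.2).diagonal_diag.symm⟩
  refine ⟨⟨fun A B ↦ Subtype.ext <| (MulAut.conj T⁻¹).injective <| Units.ext ?_⟩⟩
  obtain ⟨d, hd⟩ := hdiag A
  obtain ⟨e, he⟩ := hdiag B
  simp only [Subgroup.coe_mul, map_mul, Units.val_mul, hd, he]
  exact commute_diagonal d e

/-- The natural representation of a matrix group on column vectors, which transfers results on
representations to matrix groups. -/
def mulVecRepresentation (G : Subgroup (Matrix ι ι R)ˣ) : Representation R G (ι → R) :=
  (Matrix.toLinAlgEquiv' : Matrix ι ι R ≃ₐ[R] End R (ι → R)).toMonoidHom.comp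
    ((Units.coeHom _).comp G.subtype)

theorem mulVecRepresentation_injective {G : Subgroup (Matrix ι ι R)ˣ} :
    Function.Injective (mulVecRepresentation G) :=
  Matrix.toLinAlgEquiv'.injective.comp <| Units.val_injective.comp G.subtype_injective

theorem exists_hom_perm_of_basis_quotient [Nontrivial R] {G : Subgroup (Matrix ι ι R)ˣ}
    {S : Subgroup G} (hGS : commutator G ≤ S) (b : Basis (G ⧸ S) R (ι → R))
    (hb : ∀ g q, ∃ c : R, mulVecRepresentation G g (b q) = c • b (g • q)) :
    ∃ T : Matrix ι ι R, IsUnit T ∧ ∃ σ : G →* Equiv.Perm ι, (∀ A B, Commute (σ A) (σ B)) ∧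
      ∀ (A : G) (i j : ι),
        (T⁻¹ * ((A : (Matrix ι ι R)ˣ) : Matrix ι ι R) * T) i j ≠ 0 ↔ i = σ A j := by
  have : S.Normal := .of_commutator_le _ hGS
  have : IsMulCommutative (G ⧸ S) := Subgroup.Normal.quotient_commutative_iff_commutator_le.2 hGS
  let e : G ⧸ S ≃ ι := b.indexEquiv (Pi.basisFun R ι)
  refine ⟨(Pi.basisFun R ι).toMatrix (b.reindex e),
    .of_mul_eq_one _ (Basis.toMatrix_mul_toMatrix_flip _ (b.reindex e)),
    e.permCongrHom.toMonoidHom.comp (MulAction.toPermHom G (G ⧸ S)),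
    fun A B ↦ (commute_toPermHom_quotient S A B).map e.permCongrHom, fun A i j ↦ ?_⟩
  obtain ⟨c, hc⟩ := hb A (e.symm j)
  rw [inv_mul_mul_basis_toMatrix]
  exact toMatrix_apply_ne_zero_iff (b.reindex e) (f := mulVecRepresentation G A)
    ((mulVecRepresentation G).apply_bijective A).injective (by simpa using hc)

end CommRing

section Field

variable {K ι : Type*} [Field K] [Fintype ι] [DecidableEq ι]

theorem isIrreducible_mulVecRepresentation [Nonempty ι] {G : Subgroup (Matrix ι ι K)ˣ}
    (hirr : ∀ W : Submodule K (ι → K),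
      (∀ A ∈ G, ∀ v ∈ W, (A : Matrix ι ι K) *ᵥ v ∈ W) → W = ⊥ ∨ W = ⊤) :
    (mulVecRepresentation G).IsIrreducible where
  exists_pair_ne := ⟨⊥, ⊤, fun h ↦ bot_ne_top (congrArg Subrepresentation.toSubmodule h)⟩
  eq_bot_or_eq_top W :=
    (hirr W.toSubmodule fun A hA _ hv ↦ W.apply_mem_toSubmodule ⟨A, hA⟩ hv).imp
      (fun h ↦ Subrepresentation.toSubmodule_injective h)
      (fun h ↦ Subrepresentation.toSubmodule_injective h)

theorem stmt13_general [IsAlgClosed K] (G : Subgroup (Matrix ι ι K)ˣ)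
    (hirr : ∀ W : Submodule K (ι → K),
      (∀ A ∈ G, ∀ v ∈ W, (A : Matrix ι ι K) *ᵥ v ∈ W) → W = ⊥ ∨ W = ⊤)
    [IsMulCommutative ↥(⁅G, G⁆ : Subgroup (Matrix ι ι K)ˣ)] :
    ∃ T : Matrix ι ι K, IsUnit T ∧ ∃ σ : G →* Equiv.Perm ι, (∀ A B, Commute (σ A) (σ B)) ∧
      ∀ (A : G) (i j : ι),
        (T⁻¹ * ((A : (Matrix ι ι K)ˣ) : Matrix ι ι K) * T) i j ≠ 0 ↔ i = σ A j := by
  rcases isEmpty_or_nonempty ι with hι | hι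
  · exact ⟨1, isUnit_one, 1, fun _ _ ↦ Commute.one_left _, fun _ i ↦ hι.elim i⟩
  have := isIrreducible_mulVecRepresentation hirr
  have : IsMulCommutative (commutator G) := by
    rw [← Subgroup.comap_map_eq_self_of_injective G.subtype_injective (commutator G),
      Subgroup.map_subtype_commutator]
    exact inferInstanceAs (IsMulCommutative (⁅G, G⁆.subgroupOf G))
  obtain ⟨S, b, hGS, hb⟩ :=
    exists_basis_quotient (mulVecRepresentation G) mulVecRepresentation_injective
  exact exists_hom_perm_of_basis_quotient hGS b hb

end Field

section Pattern

variable {n : ℕ} {M N : Mat n} {σ τ : Equiv.Perm (Fin n)}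

theorem isMonomialMat_of_ne_zero_iff (hM : ∀ i j, M i j ≠ 0 ↔ i = σ j) : IsMonomialMat M := by
  simp only [IsMonomialMat, hM]
  exact ⟨fun i ↦ ⟨σ.symm i, by simp, fun j hj ↦ by simp [hj]⟩, fun j ↦ existsUnique_eq⟩

theorem patMat_eq_permMat (hM : ∀ i j, M i j ≠ 0 ↔ i = σ j) : patMat M = permMat σ := by
  ext i j
  simp [patMat, permMat, ← hM, ite_not]

theorem permMat_mul (σ τ : Equiv.Perm (Fin n)) : permMat σ * permMat τ = permMat (σ * τ) := by
  ext i j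
  by_cases hij : i = σ (τ j) <;> simp [permMat, Matrix.mul_apply, hij]

theorem patMat_mul_comm_of_ne_zero_iff (hM : ∀ i j, M i j ≠ 0 ↔ i = σ j)
    (hN : ∀ i j, N i j ≠ 0 ↔ i = τ j) (hστ : Commute σ τ) :
    patMat M * patMat N = patMat N * patMat M := by
  rw [patMat_eq_permMat hM, patMat_eq_permMat hN, permMat_mul, permMat_mul, hστ.eq]

end Pattern

/-- If the commutator subgroup of an irreducible matrix group is
diagonalizable, then the group is simultaneously similar to a monomial group with
commutative pattern. -/
theorem stmt13 {n : ℕ} (G : Subgroup (Mat n)ˣ)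
    (hirr : IrreducibleSet ((fun u : (Mat n)ˣ => (u : Mat n)) '' G))
    (hdiag : ∃ T : Mat n, IsUnit T ∧
      ∀ A ∈ ⁅G, G⁆, (T⁻¹ * (A : Mat n) * T).IsDiag) :
    ∃ T : Mat n, IsUnit T ∧
      (∀ A ∈ G, IsMonomialMat (T⁻¹ * (A : Mat n) * T)) ∧
      ∀ A ∈ G, ∀ B ∈ G,
        patMat (T⁻¹ * (A : Mat n) * T) * patMat (T⁻¹ * (B : Mat n) * T) =
          patMat (T⁻¹ * (B : Mat n) * T) * patMat (T⁻¹ * (A : Mat n) * T) := by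
  obtain ⟨S, hS, hdiag⟩ := hdiag
  have := isMulCommutative_of_isDiag_conj hS hdiag
  obtain ⟨T, hT, σ, hσ, h⟩ := stmt13_general G fun W hW ↦ hirr W (Set.forall_mem_image.2 hW)
  exact ⟨T, hT, fun A hA ↦ isMonomialMat_of_ne_zero_iff (h ⟨A, hA⟩), fun A hA B hB ↦
    patMat_mul_comm_of_ne_zero_iff (h ⟨A, hA⟩) (h ⟨B, hB⟩) (hσ _ _)⟩
end

section
/- Let G be a compact subgroup of GL_n(ℂ) such that every ring commutator ST − TS with S, T ∈ G has real spectrum. Then the set J of all involutions in G (matrices J ∈ G with J² = I) is a commutative normal subgroup of G. -/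
open Matrix BigOperators
open scoped Classical

/-!
For involutions `a` and `b` the inverse of `u = a * b` is `b * a`, so the ring commutator of `a` and
`b` is `u - u⁻¹`. Boundedness of the group puts the spectrum of `u` on the unit circle, and for
`‖z‖ = 1` the number `z - z⁻¹` is twice the imaginary part of `z` times `i`. Hence real spectrum of
`u - u⁻¹` forces `z = ±1`, and `u ^ 2` has spectrum `{1}`. In finite dimension `u ^ 2 - 1` is then
nilpotent, and since a nontrivial Jordan block with eigenvalue `1` has unbounded powers, it follows
that `u ^ 2 = 1`, which says that `a` and `b` commute.
-/

section Spectrum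

open Polynomial

variable {K A : Type*} [Field K] [Ring A] [Algebra K A]

lemma mem_spectrum_of_isRoot_minpoly {a : A} (ha : IsIntegral K a) {z : K}
    (hz : (minpoly K a).IsRoot z) : z ∈ spectrum K a := by
  obtain ⟨q, hq⟩ := dvd_iff_isRoot.mpr hz
  have hq_monic : q.Monic := (monic_X_sub_C z).of_mul_monic_left (hq ▸ minpoly.monic ha)
  have hq_ne : aeval a q ≠ 0 :=
    minpoly.aeval_ne_zero_of_dvdNotUnit_minpoly ha hq_monic
      ⟨hq_monic.ne_zero, _, not_isUnit_X_sub_C z, hq.trans (mul_comm _ _)⟩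
  have hq_mul : (a - algebraMap K A z) * aeval a q = 0 := by
    simpa only [hq, map_mul, map_sub, aeval_X, aeval_C] using minpoly.aeval K a
  rw [spectrum.mem_iff, ← IsUnit.sub_iff]
  exact fun hunit ↦ hq_ne (hunit.mul_right_eq_zero.mp hq_mul)

lemma isNilpotent_of_spectrum_subset_zero [IsAlgClosed K] {a : A} (ha : IsIntegral K a)
    (h : spectrum K a ⊆ {0}) : IsNilpotent a := by
  have hroots : (minpoly K a).roots = Multiset.replicate (minpoly K a).roots.card 0 :=
    Multiset.eq_replicate_card.mpr fun z hz ↦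
      h (mem_spectrum_of_isRoot_minpoly ha (isRoot_of_mem_roots hz))
  have hminpoly := (IsAlgClosed.splits (minpoly K a)).eq_prod_roots_of_monic (minpoly.monic ha)
  have heval := minpoly.aeval K a
  rw [hminpoly, hroots] at heval
  exact ⟨_, by simpa using heval⟩

lemma sub_inv_mem_spectrum {u : Aˣ} {z : K} (hz : z ∈ spectrum K (u : A)) :
    z - z⁻¹ ∈ spectrum K (u - ↑u⁻¹ : A) := by
  have hz0 : z ≠ 0 := spectrum.ne_zero_of_mem_of_unit hz
  have hfactor : algebraMap K A (z - z⁻¹) - (u - ↑u⁻¹) =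
      (algebraMap K A z - u) * (1 + z⁻¹ • ↑u⁻¹) := by
    simp only [Algebra.algebraMap_eq_smul_one, sub_smul, sub_mul, mul_add, smul_mul_assoc,
      mul_smul_comm, smul_sub, inv_smul_smul₀ hz0, u.mul_inv, one_mul, mul_one]
    abel
  have hcomm : Commute (algebraMap K A z - u) (1 + z⁻¹ • ↑u⁻¹) :=
    (Commute.one_right _).add_right <|
      ((Algebra.commute_algebraMap_left z _).sub_left
        (Commute.refl (u : A)).units_inv_right).smul_right _
  rw [spectrum.mem_iff, hfactor, hcomm.isUnit_mul_iff]
  exact fun h ↦ hz h.1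

end Spectrum

lemma pow_mul_eq_add_nsmul {A : Type*} [Ring A] {a b : A} (h : (a - 1) ^ 2 * b = 0) (m : ℕ) :
    a ^ m * b = b + m • ((a - 1) * b) := by
  have hfix : a * ((a - 1) * b) = (a - 1) * b := by
    rw [← sub_eq_zero, ← h]
    noncomm_ring
  induction m with
  | zero => simp
  | succ m ih =>
    rw [pow_succ', mul_assoc, ih, mul_add, mul_smul_comm, hfix, succ_nsmul]
    noncomm_ring

/-- An element of a normed ring is power-bounded if the norms of its powers `a ^ m` with `m : ℕ` are
uniformly bounded. Negative powers are not included: boundedness of the cyclic group generated by a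
unit `u` is power-boundedness of both `u` and `u⁻¹`. -/
def IsPowerBounded {A : Type*} [NormedRing A] (a : A) : Prop :=
  ∃ C : ℝ, ∀ m : ℕ, ‖a ^ m‖ ≤ C

namespace IsPowerBounded

variable {A : Type*} [NormedRing A] {a : A}

lemma pow (ha : IsPowerBounded a) (k : ℕ) : IsPowerBounded (a ^ k) :=
  ha.imp fun C hC m ↦ by simpa only [pow_mul] using hC (k * m)

lemma sub_one_mul_eq_zero [NormedSpace ℝ A] (ha : IsPowerBounded a) {b : A}
    (h : (a - 1) ^ 2 * b = 0) : (a - 1) * b = 0 := by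
  obtain ⟨C, hC⟩ := ha
  have hgrowth (m : ℕ) : m • ‖(a - 1) * b‖ ≤ C * ‖b‖ + ‖b‖ := calc
    m • ‖(a - 1) * b‖ = ‖a ^ m * b - b‖ := by
      rw [pow_mul_eq_add_nsmul h, add_sub_cancel_left, RCLike.norm_nsmul ℝ]
    _ ≤ ‖a ^ m‖ * ‖b‖ + ‖b‖ := (norm_sub_le _ _).trans (by gcongr; exact norm_mul_le _ _)
    _ ≤ C * ‖b‖ + ‖b‖ := by gcongr; exact hC m
  by_contra hne
  obtain ⟨m, hm⟩ := exists_lt_nsmul (norm_pos_iff.mpr hne) (C * ‖b‖ + ‖b‖)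
  exact (hgrowth m).not_gt hm

lemma eq_one_of_isNilpotent_sub_one [NormedSpace ℝ A] (ha : IsPowerBounded a)
    (h : IsNilpotent (a - 1)) : a = 1 := by
  obtain ⟨k, hk⟩ := h
  have hk' : (a - 1) ^ (k + 1) = 0 := by rw [pow_succ, hk, zero_mul]
  clear hk
  induction k with
  | zero => simpa [sub_eq_zero] using hk'
  | succ k ih =>
    refine ih ?_
    rw [pow_succ']
    exact ha.sub_one_mul_eq_zero (by rwa [← pow_add, add_comm])

lemma norm_le_one_of_mem_spectrum {𝕜 : Type*} [NormedField 𝕜] [NormedAlgebra 𝕜 A]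
    [CompleteSpace A] (ha : IsPowerBounded a) {z : 𝕜} (hz : z ∈ spectrum 𝕜 a) : ‖z‖ ≤ 1 := by
  obtain ⟨C, hC⟩ := ha
  by_contra! hlt
  obtain ⟨m, hm⟩ := pow_unbounded_of_one_lt (C * ‖(1 : A)‖) hlt
  refine hm.not_ge ?_
  calc ‖z‖ ^ m = ‖z ^ m‖ := (norm_pow z m).symm
    _ ≤ ‖a ^ m‖ * ‖(1 : A)‖ := spectrum.norm_le_norm_mul_of_mem (spectrum.pow_mem_pow a m hz)
    _ ≤ C * ‖(1 : A)‖ := by gcongr; exact hC m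

lemma norm_eq_one_of_mem_spectrum {𝕜 : Type*} [NormedField 𝕜] [NormedAlgebra 𝕜 A]
    [CompleteSpace A] {u : Aˣ} (hu : IsPowerBounded (u : A)) (hu_inv : IsPowerBounded (↑u⁻¹ : A))
    {z : 𝕜} (hz : z ∈ spectrum 𝕜 (u : A)) : ‖z‖ = 1 := by
  have hinv : ‖z⁻¹‖ ≤ 1 := hu_inv.norm_le_one_of_mem_spectrum (spectrum.inv₀_mem_inv_iff.mpr hz)
  rw [norm_inv, inv_le_one₀ (norm_pos_iff.mpr (spectrum.ne_zero_of_mem_of_unit hz))] at hinv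
  exact (hu.norm_le_one_of_mem_spectrum hz).antisymm hinv

end IsPowerBounded

lemma sq_eq_one_of_norm_eq_one_of_im_sub_inv_eq_zero {z : ℂ} (hz : ‖z‖ = 1)
    (him : (z - z⁻¹).im = 0) : z ^ 2 = 1 := by
  have hreal : z.im = 0 := by
    rw [Complex.inv_eq_conj hz, Complex.sub_im, Complex.conj_im] at him
    linarith
  calc z ^ 2 = starRingEnd ℂ z * z := by rw [Complex.conj_eq_iff_im.mpr hreal, sq]
    _ = 1 := by rw [Complex.conj_mul', hz, Complex.ofReal_one, one_pow]

section FiniteDimensional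

variable {A : Type*} [NormedRing A] [NormedAlgebra ℂ A] [FiniteDimensional ℂ A]

lemma IsPowerBounded.eq_one_of_spectrum_subset_one {a : A} (ha : IsPowerBounded a)
    (h : spectrum ℂ a ⊆ {1}) : a = 1 := by
  refine ha.eq_one_of_isNilpotent_sub_one
    (isNilpotent_of_spectrum_subset_zero (K := ℂ) (.of_finite ℂ _) ?_)
  rw [← map_one (algebraMap ℂ A), ← spectrum.sub_singleton_eq]
  exact (Set.sub_subset_sub_right h).trans (by simp)

lemma sq_eq_one_of_im_spectrum_sub_inv {u : Aˣ} (hu : IsPowerBounded (u : A))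
    (hu_inv : IsPowerBounded (↑u⁻¹ : A))
    (hreal : ∀ z ∈ spectrum ℂ (u - ↑u⁻¹ : A), z.im = 0) : u ^ 2 = 1 := by
  have := FiniteDimensional.complete ℂ A
  refine Units.ext ((hu.pow 2).eq_one_of_spectrum_subset_one ?_)
  rw [spectrum.map_pow_of_pos _ two_pos, Set.image_subset_iff]
  exact fun z hz ↦ sq_eq_one_of_norm_eq_one_of_im_sub_inv_eq_zero
    (hu.norm_eq_one_of_mem_spectrum hu_inv hz) (hreal _ (sub_inv_mem_spectrum hz))

end FiniteDimensional

section Group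

variable {G : Type*} [Group G]

lemma mul_inv_rev_of_sq_eq_one {a b : G} (ha : a ^ 2 = 1) (hb : b ^ 2 = 1) : (a * b)⁻¹ = b * a := by
  rw [inv_eq_iff_mul_eq_one, mul_assoc, ← mul_assoc b, ← sq b, hb, one_mul, ← sq, ha]

lemma commute_of_mul_sq_eq_one {a b : G} (ha : a ^ 2 = 1) (hb : b ^ 2 = 1)
    (hab : (a * b) ^ 2 = 1) : Commute a b := by
  rw [sq, ← eq_inv_iff_mul_eq_one, mul_inv_rev_of_sq_eq_one ha hb] at hab
  exact hab

lemma exists_normal_isMulCommutative_of_commute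
    (h : ∀ a b : G, a ^ 2 = 1 → b ^ 2 = 1 → Commute a b) :
    ∃ J : Subgroup G, (∀ g, g ∈ J ↔ g ^ 2 = 1) ∧ J.Normal ∧ IsMulCommutative J :=
  ⟨{ carrier := {g | g ^ 2 = 1}
     one_mem' := one_pow 2
     mul_mem' := fun {a b} (ha : a ^ 2 = 1) (hb : b ^ 2 = 1) ↦
       show (a * b) ^ 2 = 1 by rw [(h a b ha hb).mul_pow, ha, hb, one_mul]
     inv_mem' := fun {a} (ha : a ^ 2 = 1) ↦ show a⁻¹ ^ 2 = 1 by rw [inv_pow, ha, inv_one] },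
   fun _ ↦ Iff.rfl,
   ⟨fun a (ha : a ^ 2 = 1) g ↦
      show (g * a * g⁻¹) ^ 2 = 1 by rw [conj_pow, ha, mul_one, mul_inv_cancel]⟩,
   ⟨⟨fun a b ↦ Subtype.ext (h a b a.2 b.2)⟩⟩⟩

end Group

lemma setOf_sq_eq_one_eq_image {H M : Type*} [Group H] [Monoid M] {φ : H →* M}
    (hφ : Function.Injective φ) {K : Subgroup H} (hK : ∀ g, g ∈ K ↔ g ^ 2 = 1) :
    {x | x ∈ Set.range φ ∧ x ^ 2 = 1} = φ '' K := by
  have hsq (g : H) : φ g ^ 2 = 1 ↔ g ∈ K := by rw [← map_pow, map_eq_one_iff φ hφ, hK]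
  ext x
  constructor
  · rintro ⟨⟨g, rfl⟩, hg⟩
    exact ⟨g, (hsq g).mp hg, rfl⟩
  · rintro ⟨g, hg, rfl⟩
    exact ⟨⟨g, rfl⟩, (hsq g).mpr hg⟩

lemma image_isMulCommutative_normal {H ι R : Type*} [Group H] [Fintype ι] [DecidableEq ι]
    [CommRing R] (φ : H →* Matrix ι ι R) (K : Subgroup H) [IsMulCommutative K]
    [hnormal : K.Normal] :
    (∀ A ∈ φ '' K, ∀ B ∈ φ '' K, A * B = B * A) ∧
    1 ∈ φ '' K ∧
    (∀ A ∈ φ '' K, ∀ B ∈ φ '' K, A * B ∈ φ '' K) ∧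
    (∀ A ∈ φ '' K, A⁻¹ ∈ φ '' K) ∧
    (∀ g ∈ Set.range φ, ∀ A ∈ φ '' K, g⁻¹ * A * g ∈ φ '' K) := by
  have hinv (g : H) : (φ g)⁻¹ = φ g⁻¹ :=
    Matrix.inv_eq_left_inv (by rw [← map_mul, inv_mul_cancel, map_one])
  simp only [Set.forall_mem_image, Set.forall_mem_range, hinv, ← map_mul]
  exact ⟨fun a ha b hb ↦ congrArg φ (setLike_mul_comm ha hb),
    ⟨1, K.one_mem, map_one φ⟩,
    fun a ha b hb ↦ Set.mem_image_of_mem φ (K.mul_mem ha hb),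
    fun a ha ↦ Set.mem_image_of_mem φ (K.inv_mem ha),
    fun g a ha ↦ Set.mem_image_of_mem φ (hnormal.conj_mem' a ha g)⟩

namespace IsMatGroup

variable {n : ℕ} {G : Set (Mat n)}

/-- A matrix group `G`, given as a set of matrices, regarded as a subgroup of the units of the
matrix algebra. -/
def toSubgroup (hG : IsMatGroup G) : Subgroup (Mat n)ˣ where
  carrier := {u | (u : Mat n) ∈ G}
  one_mem' := hG.1
  mul_mem' hu hv := hG.2.1 _ hu _ hv
  inv_mem' {u} hu := by simpa only [Set.mem_ofPred_eq, coe_units_inv] using (hG.2.2 _ hu).2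

/-- The inclusion of a matrix group into the matrix algebra, through which statements about
subgroups of `hG.toSubgroup` become statements about sets of matrices. -/
def coeHom (hG : IsMatGroup G) : hG.toSubgroup →* Mat n :=
  (Units.coeHom (Mat n)).comp hG.toSubgroup.subtype

lemma coeHom_injective (hG : IsMatGroup G) : Function.Injective hG.coeHom :=
  Units.val_injective.comp Subtype.val_injective

lemma range_coeHom (hG : IsMatGroup G) : Set.range hG.coeHom = G := by
  refine (Set.range_subset_iff.mpr fun g ↦ g.2).antisymm fun M hM ↦ ?_
  obtain ⟨u, rfl⟩ := (hG.2.2 M hM).1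
  exact ⟨⟨u, hM⟩, rfl⟩

end IsMatGroup

theorem stmt18_general {A : Type*} [NormedRing A] [NormedAlgebra ℂ A] [FiniteDimensional ℂ A]
    (G : Subgroup Aˣ) (hbdd : ∃ C : ℝ, ∀ u ∈ G, ‖(u : A)‖ ≤ C)
    (hcomm : ∀ s ∈ G, ∀ t ∈ G, s ^ 2 = 1 → t ^ 2 = 1 →
      ∀ z ∈ spectrum ℂ (s * t - t * s : A), z.im = 0) :
    ∃ J : Subgroup G, (∀ g, g ∈ J ↔ g ^ 2 = 1) ∧ J.Normal ∧ IsMulCommutative J := by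
  have hpow {u : Aˣ} (hu : u ∈ G) : IsPowerBounded (u : A) :=
    hbdd.imp fun C hC m ↦ u.val_pow_eq_pow_val m ▸ hC _ (G.pow_mem hu m)
  refine exists_normal_isMulCommutative_of_commute fun ⟨a, haG⟩ ⟨b, hbG⟩ ha hb ↦ ?_
  replace ha : a ^ 2 = 1 := congrArg Subtype.val ha
  replace hb : b ^ 2 = 1 := congrArg Subtype.val hb
  have habG : a * b ∈ G := G.mul_mem haG hbG
  have hab : (a * b) ^ 2 = 1 := by
    refine sq_eq_one_of_im_spectrum_sub_inv (hpow habG) (hpow (G.inv_mem habG)) ?_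
    rw [mul_inv_rev_of_sq_eq_one ha hb]
    exact hcomm a haG b hbG ha hb
  exact Subtype.ext (commute_of_mul_sq_eq_one ha hb hab)

/-- In a compact matrix group all of whose ring commutators have real
spectra, the set of involutions is a commutative normal subgroup. -/
theorem stmt18 {n : ℕ} (G : Set (Mat n))
    (hgrp : IsMatGroup G) (hcpt : IsCompact G)
    (hcomm : ∀ A ∈ G, ∀ B ∈ G, RealSpectrum (A * B - B * A))
    (J : Set (Mat n)) (hJ : J = {M | M ∈ G ∧ M ^ 2 = 1}) :
    (∀ A ∈ J, ∀ B ∈ J, A * B = B * A) ∧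
    (1 : Mat n) ∈ J ∧
    (∀ A ∈ J, ∀ B ∈ J, A * B ∈ J) ∧
    (∀ A ∈ J, A⁻¹ ∈ J) ∧
    (∀ g ∈ G, ∀ A ∈ J, g⁻¹ * A * g ∈ J) := by
  obtain ⟨K, hK, _, _⟩ := open scoped Matrix.Norms.Operator in
    stmt18_general hgrp.toSubgroup (hcpt.isBounded.exists_norm_le.imp fun _ hC _ hu ↦ hC _ hu)
      fun s hs t ht _ _ ↦ hcomm s hs t ht
  simpa only [hJ, ← setOf_sq_eq_one_eq_image hgrp.coeHom_injective hK, hgrp.range_coeHom]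
    using image_isMulCommutative_normal hgrp.coeHom K
end

section
/- If G is a nonabelian compact subgroup of GL_n(ℂ) such that every ring commutator ST − TS with S, T ∈ G has real spectrum, then G contains a noncentral involution, i.e., a matrix J ∈ G with J² = I that does not commute with every element of G. -/
open Matrix BigOperators
open scoped Classical

/-!
Suppose that all involutions of `G` are central. By Weyl's averaging trick `G` may be taken to be
unitary. The ring commutator of `a * t⁻¹` and `t` is `a - t * a * t⁻¹`, so all differences of
conjugate elements have real spectrum.

If `a` and `b` are conjugate and commute, then `a - b` and `a ^ 2 - b ^ 2` are normal with real
spectrum, hence self-adjoint. A joint eigenvalue `(α, β)` of `a` and `b` thus satisfies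
`α = β ∨ α * β = -1` and `α ^ 2 = β ^ 2 ∨ α ^ 2 * β ^ 2 = -1`, so `a ^ 2 = b ^ 2` and `j = a * b⁻¹`
is a central involution. If `b = t * a * t⁻¹`, then `a * t - t * a` turns out to be both
self-adjoint and skew-adjoint, so that `a = b`.

If `a` is close to `1` and `b` is conjugate to `a`, then `X = a - b` has a relatively small
Hermitian part, whereas `0 ≤ tr (X * X)` forces `2 * ‖X‖ ^ 2 ≤ ‖X + Xᴴ‖ ^ 2`. Hence `X = 0`, so a
neighbourhood of `1` is central and compactness makes the center of finite index.

It remains to see that a group with center of finite index in which commuting conjugates coincide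
is abelian. By induction on the index all centralizers of noncentral elements are abelian, so they
become malnormal modulo the center. The conjugates of a nontrivial malnormal subgroup fill at least
half of a finite group, so the conjugates of any two of these centralizers meet; it follows that
the conjugates of a single one cover the quotient, which no proper subgroup of a finite group does.
-/

open Subgroup Group

section Malnormal

variable {G : Type*} [Group G]

/-- A subgroup `K` is malnormal if it meets `g⁻¹ * K * g` trivially whenever `g ∉ K`. -/
def IsMalnormal (K : Subgroup G) : Prop :=
  ∀ g : G, ∀ k ∈ K, k ≠ 1 → g * k * g⁻¹ ∈ K → g ∈ K

/-- The map sending a coset `g K` and a nontrivial `k ∈ K` to `g * k * g⁻¹`, where `g` is the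
chosen representative of the coset. It parametrizes the conjugates of the nontrivial elements of
`K`, bijectively if `K` is malnormal. -/
noncomputable def cosetConj (K : Subgroup G) (p : (G ⧸ K) × ((K : Set G) \ {1} : Set G)) : G :=
  p.1.out * p.2 * p.1.out⁻¹

theorem range_cosetConj (K : Subgroup G) :
    Set.range (cosetConj K) = conjugatesOfSet ((K : Set G) \ {1}) := by
  ext x
  simp only [mem_conjugatesOfSet_iff, isConj_iff]
  constructor
  · rintro ⟨⟨q, k, hk⟩, rfl⟩
    exact ⟨k, hk, q.out, rfl⟩
  · rintro ⟨k, ⟨hk, hk1⟩, g, rfl⟩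
    obtain ⟨h, hh⟩ := QuotientGroup.mk_out_eq_mul K g
    refine ⟨(g, ⟨(h : G)⁻¹ * k * h, K.mul_mem (K.mul_mem (K.inv_mem h.2) hk) h.2, ?_⟩), ?_⟩
    · rw [Set.mem_singleton_iff, mul_eq_one_iff_eq_inv, mul_eq_left]
      exact hk1
    · simp only [cosetConj, hh]
      group

theorem IsMalnormal.cosetConj_injective {K : Subgroup G} (hK : IsMalnormal K) :
    Function.Injective (cosetConj K) := by
  rintro ⟨q, k, hk, hk1⟩ ⟨r, l, hl, hl1⟩ h
  replace h : q.out * k * q.out⁻¹ = r.out * l * r.out⁻¹ := h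
  have hconj : r.out⁻¹ * q.out * k * (r.out⁻¹ * q.out)⁻¹ = l :=
    calc r.out⁻¹ * q.out * k * (r.out⁻¹ * q.out)⁻¹
      _ = r.out⁻¹ * (q.out * k * q.out⁻¹) * r.out := by group
      _ = l := by rw [h]; group
  have hqr : r = q := by
    rw [← r.out_eq', ← q.out_eq']
    exact QuotientGroup.eq.2 (hK _ k hk hk1 (hconj ▸ hl))
  subst hqr
  obtain rfl : k = l := mul_left_cancel (mul_right_cancel h)
  rfl

theorem one_notMem_conjugatesOfSet_diff (K : Subgroup G) :
    (1 : G) ∉ conjugatesOfSet ((K : Set G) \ {1}) := by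
  simp [mem_conjugatesOfSet_iff]

variable [Finite G]

theorem card_cosetConj_domain (K : Subgroup G) :
    Nat.card ((G ⧸ K) × ((K : Set G) \ {1} : Set G)) + K.index = Nat.card G := by
  have hK : ((K : Set G) \ {1}).ncard + 1 = Nat.card K :=
    Set.ncard_sdiff_singleton_add_one K.one_mem
  rw [Nat.card_prod, Nat.card_coe_set_eq, ← Subgroup.index, ← Nat.mul_add_one, hK,
    K.index_mul_card]

theorem ncard_conjugatesOfSet_add_index_le (K : Subgroup G) :
    (conjugatesOfSet ((K : Set G) \ {1})).ncard + K.index ≤ Nat.card G := by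
  rw [← range_cosetConj, ← card_cosetConj_domain K]
  exact Nat.add_le_add_right (Finite.card_range_le _) _

theorem IsMalnormal.ncard_conjugatesOfSet_add_index {K : Subgroup G} (hK : IsMalnormal K) :
    (conjugatesOfSet ((K : Set G) \ {1})).ncard + K.index = Nat.card G := by
  rw [← range_cosetConj, ← card_cosetConj_domain K, ← Nat.card_coe_set_eq,
    Nat.card_range_of_injective hK.cosetConj_injective]

theorem two_mul_index_le_card {K : Subgroup G} (hK : K ≠ ⊥) : 2 * K.index ≤ Nat.card G := by
  rw [← K.card_mul_index]
  exact Nat.mul_le_mul_right _ (K.one_lt_card_iff_ne_bot.2 hK)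

/- The conjugates of nontrivial elements of a malnormal `K ≠ ⊥` make up at least half of `G`, so
two such families together with `1` do not fit into `G` disjointly. -/
theorem IsMalnormal.exists_isConj {K L : Subgroup G} (hK : IsMalnormal K) (hL : IsMalnormal L)
    (hK₀ : K ≠ ⊥) (hL₀ : L ≠ ⊥) : ∃ k ∈ K, k ≠ 1 ∧ ∃ l ∈ L, IsConj k l := by
  by_contra! hKL
  have hdisj : Disjoint (conjugatesOfSet ((K : Set G) \ {1})) (conjugatesOfSet (L \ {1})) := by
    refine Set.disjoint_left.2 fun x hxK hxL ↦ ?_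
    obtain ⟨k, ⟨hk, hk1⟩, hkx⟩ := mem_conjugatesOfSet_iff.1 hxK
    obtain ⟨l, ⟨hl, -⟩, hlx⟩ := mem_conjugatesOfSet_iff.1 hxL
    exact hKL k hk hk1 l hl (hkx.trans hlx.symm)
  have hone : (1 : G) ∉ conjugatesOfSet ((K : Set G) \ {1}) ∪ conjugatesOfSet (L \ {1}) := by
    simp only [Set.mem_union, one_notMem_conjugatesOfSet_diff, or_self, not_false_eq_true]
  have hle := Set.ncard_le_card (insert 1 (conjugatesOfSet ((K : Set G) \ {1}) ∪
    conjugatesOfSet (L \ {1})))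
  rw [Set.ncard_insert_of_notMem hone, Set.ncard_union_eq hdisj] at hle
  have hcardK := hK.ncard_conjugatesOfSet_add_index
  have hcardL := hL.ncard_conjugatesOfSet_add_index
  have hindexK := two_mul_index_le_card hK₀
  have hindexL := two_mul_index_le_card hL₀
  omega

theorem eq_top_of_forall_exists_isConj {K : Subgroup G} (h : ∀ x, ∃ k ∈ K, IsConj k x) :
    K = ⊤ := by
  have hcover : insert 1 (conjugatesOfSet ((K : Set G) \ {1})) = Set.univ := by
    refine Set.eq_univ_of_forall fun x ↦ ?_
    obtain ⟨k, hk, hkx⟩ := h x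
    by_cases hk1 : k = 1
    · exact .inl (isConj_one_right.1 (hk1 ▸ hkx))
    · exact .inr (mem_conjugatesOfSet_iff.2 ⟨k, ⟨hk, hk1⟩, hkx⟩)
  have hcard := Set.ncard_insert_of_notMem (one_notMem_conjugatesOfSet_diff K)
  rw [hcover, Set.ncard_univ] at hcard
  have hle := ncard_conjugatesOfSet_add_index_le K
  have hpos : K.index ≠ 0 := index_ne_zero_of_finite
  exact index_eq_one.1 (by omega)

end Malnormal

section CommTransitive

variable {G : Type*} [Group G]

variable (G) in
/-- Commutative transitivity modulo the center: the centralizers of the noncentral elements are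
abelian. -/
def IsCommTransitive : Prop :=
  ∀ ⦃a x b : G⦄, x ∉ center G → Commute a x → Commute x b → Commute a b

/-- The image in `G ⧸ center G` of the centralizer of `x`. -/
def centralizerModCenter (x : G) : Subgroup (G ⧸ center G) :=
  (centralizer {x}).map (QuotientGroup.mk' (center G))

theorem mk_mem_centralizerModCenter {x g : G} :
    (g : G ⧸ center G) ∈ centralizerModCenter x ↔ Commute g x := by
  refine ⟨?_, fun h ↦ ⟨g, mem_centralizer_singleton_iff.2 h, rfl⟩⟩
  rintro ⟨c, hc, hcg⟩
  have hcz : c⁻¹ * g ∈ centralizer {x} :=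
    center_le_centralizer _ (QuotientGroup.eq.1 hcg)
  have hg : g ∈ centralizer {x} := by simpa using mul_mem hc hcz
  exact mem_centralizer_singleton_iff.1 hg

theorem centralizerModCenter_ne_bot {x : G} (hx : x ∉ center G) :
    centralizerModCenter x ≠ ⊥ := by
  intro hbot
  have hmem : (x : G ⧸ center G) ∈ centralizerModCenter x :=
    mk_mem_centralizerModCenter.2 (.refl x)
  rw [hbot, mem_bot, QuotientGroup.eq_one_iff] at hmem
  exact hx hmem

theorem IsCommTransitive.isMalnormal_centralizerModCenter (hG : IsCommTransitive G)
    (hconj : ∀ a b : G, IsConj a b → Commute a b → a = b) {x : G} (hx : x ∉ center G) :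
    IsMalnormal (centralizerModCenter x) := by
  intro g k hk hk1 hgk
  induction g using QuotientGroup.induction_on with | H g => ?_
  induction k using QuotientGroup.induction_on with | H k => ?_
  replace hgk : ((g * k * g⁻¹ : G) : G ⧸ center G) ∈ centralizerModCenter x := hgk
  rw [mk_mem_centralizerModCenter] at hk hgk ⊢
  rw [Ne, QuotientGroup.eq_one_iff] at hk1
  have hkg : k = g * k * g⁻¹ := hconj _ _ (isConj_iff.2 ⟨g, rfl⟩) (hG hx hk hgk.symm)
  have hgk : Commute g k := eq_mul_inv_iff_mul_eq.1 hkg |>.symm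
  exact hG hk1 hgk hk

theorem IsCommTransitive.exists_isConj_commute [(center G).FiniteIndex]
    (hG : IsCommTransitive G) (hconj : ∀ a b : G, IsConj a b → Commute a b → a = b) {x y : G}
    (hx : x ∉ center G) (hy : y ∉ center G) : ∃ z, Commute z x ∧ IsConj z y := by
  obtain ⟨k, hk, hk1, l, hl, hkl⟩ :=
    (hG.isMalnormal_centralizerModCenter hconj hy).exists_isConj
      (hG.isMalnormal_centralizerModCenter hconj hx)
      (centralizerModCenter_ne_bot hy) (centralizerModCenter_ne_bot hx)
  obtain ⟨g, rfl⟩ := isConj_iff.1 hkl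
  induction g using QuotientGroup.induction_on with | H g => ?_
  induction k using QuotientGroup.induction_on with | H k => ?_
  replace hl : ((g * k * g⁻¹ : G) : G ⧸ center G) ∈ centralizerModCenter x := hl
  rw [mk_mem_centralizerModCenter] at hk hl
  rw [Ne, QuotientGroup.eq_one_iff] at hk1
  have hgk : g * k * g⁻¹ ∉ center G := by
    rwa [← (inferInstance : (center G).Normal).mem_comm_iff, inv_mul_cancel_left]
  refine ⟨g * y * g⁻¹, hG hgk ?_ hl, IsConj.symm (isConj_iff.2 ⟨g, rfl⟩)⟩
  exact ((Commute.conj_iff g).2 hk).symm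

theorem IsCommTransitive.center_eq_top [(center G).FiniteIndex] (hG : IsCommTransitive G)
    (hconj : ∀ a b : G, IsConj a b → Commute a b → a = b) : center G = ⊤ := by
  by_contra hne
  obtain ⟨x, -, hx⟩ := SetLike.exists_of_lt (lt_top_iff_ne_top.2 hne)
  have htop : centralizerModCenter x = ⊤ := by
    refine eq_top_of_forall_exists_isConj fun q ↦ ?_
    induction q using QuotientGroup.induction_on with | H y => ?_
    by_cases hy : y ∈ center G
    · exact ⟨1, one_mem _, ((QuotientGroup.eq_one_iff y).2 hy) ▸ IsConj.refl _⟩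
    · obtain ⟨z, hzx, hzy⟩ := hG.exists_isConj_commute hconj hx hy
      exact ⟨z, mk_mem_centralizerModCenter.2 hzx, (QuotientGroup.mk' (center G)).map_isConj hzy⟩
  refine hx (mem_center_iff.2 fun g ↦ ?_)
  exact mk_mem_centralizerModCenter.1 (htop ▸ mem_top (g : G ⧸ center G))

theorem center_subgroupOf_le_center (H : Subgroup G) : (center G).subgroupOf H ≤ center H :=
  fun _ hc ↦ mem_center_iff.2 fun h ↦ Subtype.ext (mem_center_iff.1 hc h)

theorem finiteIndex_center_of_subgroup [(center G).FiniteIndex] (H : Subgroup G) :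
    (center H).FiniteIndex :=
  finiteIndex_of_le (center_subgroupOf_le_center H)

theorem index_center_lt_of_ne_top [(center G).FiniteIndex] {H : Subgroup G}
    (hle : center G ≤ H) (hne : H ≠ ⊤) : (center H).index < (center G).index :=
  calc (center H).index
    _ ≤ (center G).relIndex H := index_antitone (center_subgroupOf_le_center H)
    _ < (center G).relIndex H * H.index := by
      have hrel : (center G).relIndex H ≠ 0 := FiniteIndex.index_ne_zero
      have := finiteIndex_of_le hle
      have hH : H.index ≠ 0 := FiniteIndex.index_ne_zero
      exact lt_mul_right (Nat.pos_of_ne_zero hrel) (by have := index_eq_one.not.2 hne; omega)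
    _ = (center G).index := relIndex_mul_index hle

theorem center_eq_top_of_isConj_of_commute [(center G).FiniteIndex]
    (hconj : ∀ a b : G, IsConj a b → Commute a b → a = b) : center G = ⊤ := by
  induction hn : (center G).index using Nat.strong_induction_on generalizing G with | _ n ih => ?_
  subst hn
  refine IsCommTransitive.center_eq_top (fun a x b hx hax hxb ↦ ?_) hconj
  have hC : center (centralizer {x}) = ⊤ := by
    have := finiteIndex_center_of_subgroup (centralizer {x})
    refine ih _ (index_center_lt_of_ne_top (center_le_centralizer _) fun htop ↦ hx ?_)
      (fun c d hcd hcomm ↦ ?_) rfl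
    · exact centralizer_eq_top_iff_subset.1 htop rfl
    · exact Subtype.ext (hconj c d ((centralizer {x}).subtype.map_isConj hcd)
        (hcomm.map (centralizer {x}).subtype))
  have ha : a ∈ centralizer {x} := mem_centralizer_singleton_iff.2 hax
  have hb : b ∈ centralizer {x} := mem_centralizer_singleton_iff.2 hxb.symm
  have hbC : (⟨b, hb⟩ : centralizer {x}) ∈ center (centralizer {x}) := hC ▸ mem_top _
  exact congrArg Subtype.val (mem_center_iff.1 hbC ⟨a, ha⟩)

end CommTransitive

section StarRing

variable {R : Type*} [Ring R] [StarRing R]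

theorem sub_mul_mul_eq_neg_sub_of_commute {u v : unitary R} (huv : Commute u v)
    (h : IsSelfAdjoint ((u : R) - v)) : ((u : R) - v) * (u * v) = -(u - v) := by
  have huv' : (u : R) * v = v * u := congrArg Subtype.val huv.eq
  calc ((u : R) - v) * (u * v)
    _ = (star (u : R) - star (v : R)) * (u * v) := by rw [← star_sub, h.star_eq]
    _ = star (u : R) * u * v - star (v : R) * v * u := by
      rw [sub_mul, mul_assoc (star (u : R)), mul_assoc (star (v : R)), huv']
    _ = -(u - v) := by simp

theorem sq_eq_sq_of_commute_of_isSelfAdjoint_sub [IsAddTorsionFree R] {u v : unitary R}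
    (huv : Commute u v) (h : IsSelfAdjoint ((u : R) - v))
    (h₂ : IsSelfAdjoint (((u ^ 2 : unitary R) : R) - (v ^ 2 : unitary R))) : u ^ 2 = v ^ 2 := by
  have huv' : Commute (u : R) v := congrArg Subtype.val huv.eq
  have hneg := sub_mul_mul_eq_neg_sub_of_commute huv h
  have hneg₂ := sub_mul_mul_eq_neg_sub_of_commute (huv.pow_pow 2 2) h₂
  push_cast at hneg₂
  have hpos : ((u : R) ^ 2 - (v : R) ^ 2) * ((u : R) ^ 2 * (v : R) ^ 2) = u ^ 2 - v ^ 2 :=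
    calc ((u : R) ^ 2 - (v : R) ^ 2) * ((u : R) ^ 2 * (v : R) ^ 2)
      _ = (u + v) * ((u - v) * (u * v) * (u * v)) := by
        rw [huv'.sq_sub_sq, ← huv'.mul_pow, sq]
        simp only [mul_assoc]
      _ = u ^ 2 - v ^ 2 := by rw [hneg, neg_mul, hneg, neg_neg, huv'.sq_sub_sq]
  refine Subtype.ext (sub_eq_zero.1 (self_eq_neg.1 ?_))
  push_cast
  exact hpos.symm.trans hneg₂

theorem star_mul_sub_mul_eq_neg {a t j : R} (hj : IsSelfAdjoint j) (hjj : j * j = 1)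
    (ha : IsSelfAdjoint (a - j * a)) (ht : IsSelfAdjoint (t - j * t))
    (hat : a * t = j * (t * a)) : star (a * t - t * a) = -(a * t - t * a) := by
  have he : IsSelfAdjoint (1 - j) := .sub (.one R) hj
  have hej : (1 - j) * j = -(1 - j) := by rw [sub_mul, one_mul, hjj, neg_sub]
  have hcomm : a * t - t * a = -((1 - j) * (t * a)) := by rw [hat, sub_mul, one_mul, neg_sub]
  rw [← one_sub_mul] at ha ht
  calc star (a * t - t * a)
    _ = -(star a * star ((1 - j) * t)) := by rw [hcomm, ← mul_assoc, star_neg, star_mul]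
    _ = -(star a * star (1 - j) * t) := by rw [ht.star_eq, he.star_eq, mul_assoc]
    _ = -((1 - j) * (a * t)) := by rw [← star_mul, ha.star_eq, mul_assoc]
    _ = (1 - j) * (t * a) := by rw [hat, ← mul_assoc, hej, neg_mul, neg_neg]
    _ = -(a * t - t * a) := by rw [hcomm, neg_neg]

end StarRing

section CStarAlgebra

variable {A : Type*} [CStarAlgebra A]

theorem isSelfAdjoint_of_isStarNormal_of_spectrum_im_eq_zero {x : A} [IsStarNormal x]
    (hx : ∀ z ∈ spectrum ℂ x, z.im = 0) : IsSelfAdjoint x := by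
  have hrestr : SpectrumRestricts x Complex.reCLM :=
    SpectrumRestricts.real_iff.2 fun z hz ↦ Complex.ext rfl (by simpa using hx z hz)
  exact isSelfAdjoint_iff_isStarNormal_and_quasispectrumRestricts.2 ⟨inferInstance, hrestr⟩

theorem isSelfAdjoint_sub_of_commute {u v : unitary A} (huv : Commute u v)
    (h : ∀ z ∈ spectrum ℂ ((u : A) - v), z.im = 0) : IsSelfAdjoint ((u : A) - v) := by
  have hstar : Commute (u : A) (star (v : A)) := congrArg Subtype.val huv.inv_right.eq
  have : IsStarNormal ((u : A) - v) := hstar.isStarNormal_sub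
  exact isSelfAdjoint_of_isStarNormal_of_spectrum_im_eq_zero h

end CStarAlgebra

section RealCommutators

variable {Γ A : Type*} [Group Γ]

/-- All ring commutators of operators of the representation `ρ` have real spectrum: the hypothesis
of the main theorem, for a group of operators given as the image of an abstract group. -/
def HasRealCommutators [Ring A] [Algebra ℂ A] (ρ : Γ →* A) : Prop :=
  ∀ s t : Γ, ∀ z ∈ spectrum ℂ (ρ s * ρ t - ρ t * ρ s), z.im = 0

theorem HasRealCommutators.im_eq_zero_of_isConj [Ring A] [Algebra ℂ A] {ρ : Γ →* A}
    (hρ : HasRealCommutators ρ) {a b : Γ} (hab : IsConj a b) :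
    ∀ z ∈ spectrum ℂ (ρ a - ρ b), z.im = 0 := by
  obtain ⟨t, rfl⟩ := isConj_iff.1 hab
  have h := hρ (a * t⁻¹) t
  rwa [← map_mul, ← map_mul, inv_mul_cancel_right, ← mul_assoc] at h

variable [CStarAlgebra A] {ρ : Γ →* unitary A}

theorem sq_eq_sq_of_isConj_of_commute (hinj : Function.Injective ρ)
    (hρ : HasRealCommutators ((unitary A).subtype.comp ρ)) {a b : Γ} (hconj : IsConj a b)
    (hcomm : Commute a b) : a ^ 2 = b ^ 2 := by
  have : IsAddTorsionFree A := .of_isTorsionFree ℂ A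
  refine hinj ?_
  rw [map_pow, map_pow]
  have hsq : IsConj (a ^ 2) (b ^ 2) := by
    obtain ⟨t, rfl⟩ := isConj_iff.1 hconj
    exact isConj_iff.2 ⟨t, conj_pow.symm⟩
  refine sq_eq_sq_of_commute_of_isSelfAdjoint_sub (hcomm.map ρ)
    (isSelfAdjoint_sub_of_commute (hcomm.map ρ) (hρ.im_eq_zero_of_isConj hconj)) ?_
  rw [← map_pow, ← map_pow]
  exact isSelfAdjoint_sub_of_commute ((hcomm.pow_pow 2 2).map ρ) (hρ.im_eq_zero_of_isConj hsq)

theorem isSelfAdjoint_sub_mul_of_isConj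
    (hρ : HasRealCommutators ((unitary A).subtype.comp ρ)) {x j : Γ} (hj : j ∈ center Γ)
    (hconj : IsConj x (j * x)) : IsSelfAdjoint ((ρ x : A) - ρ j * ρ x) := by
  have hcomm : Commute x (j * x) := .mul_right (mem_center_iff.1 hj x) (.refl x)
  have h := isSelfAdjoint_sub_of_commute (hcomm.map ρ) (hρ.im_eq_zero_of_isConj hconj)
  rwa [map_mul] at h

theorem commute_of_mul_eq_mul_mul (hinj : Function.Injective ρ)
    (hρ : HasRealCommutators ((unitary A).subtype.comp ρ)) {a t j : Γ} (hj : j ∈ center Γ)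
    (hjj : j ^ 2 = 1) (hat : a * t = j * (t * a)) : Commute a t := by
  have : IsAddTorsionFree A := .of_isTorsionFree ℂ A
  have ha : IsConj a (j * a) := by
    refine isConj_iff.2 ⟨t⁻¹, ?_⟩
    rw [inv_inv, mul_assoc, hat, ← mul_assoc j, ← mem_center_iff.1 hj, mul_assoc,
      inv_mul_cancel_left]
  have ht : IsConj t (j * t) := isConj_iff.2 ⟨a, by rw [hat]; group⟩
  have hmul (g h : Γ) : (ρ (g * h) : A) = ρ g * ρ h := by rw [map_mul, Submonoid.coe_mul]
  have hjj' : (ρ j : A) * ρ j = 1 := by rw [← hmul, ← sq, hjj, map_one, OneMemClass.coe_one]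
  have hj' : IsSelfAdjoint (ρ j : A) := by
    have hinv : j⁻¹ = j := inv_eq_of_mul_eq_one_left (by rw [← sq, hjj])
    rw [IsSelfAdjoint, ← Unitary.coe_star, Unitary.star_eq_inv, ← map_inv, hinv]
  have hskew := star_mul_sub_mul_eq_neg hj' hjj' (isSelfAdjoint_sub_mul_of_isConj hρ hj ha)
    (isSelfAdjoint_sub_mul_of_isConj hρ hj ht) (by rw [← hmul, ← hmul, ← hmul, hat])
  have : IsStarNormal ((ρ a : A) * ρ t - ρ t * ρ a) :=
    ⟨by rw [hskew]; exact .neg_left (.refl _)⟩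
  have hself : IsSelfAdjoint ((ρ a : A) * ρ t - ρ t * ρ a) :=
    isSelfAdjoint_of_isStarNormal_of_spectrum_im_eq_zero (hρ a t)
  have hzero := sub_eq_zero.1 (self_eq_neg.1 (hself.star_eq.symm.trans hskew))
  exact hinj (Subtype.ext (by rw [hmul, hmul, hzero]))

theorem eq_of_isConj_of_commute (hinj : Function.Injective ρ)
    (hρ : HasRealCommutators ((unitary A).subtype.comp ρ))
    (hinv : ∀ j : Γ, j ^ 2 = 1 → j ∈ center Γ) {a b : Γ} (hconj : IsConj a b)
    (hcomm : Commute a b) : a = b := by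
  have hsq := sq_eq_sq_of_isConj_of_commute hinj hρ hconj hcomm
  obtain ⟨t, rfl⟩ := isConj_iff.1 hconj
  set j : Γ := a * (t * a * t⁻¹)⁻¹ with hj
  have hjj : j ^ 2 = 1 := by
    rw [hj, hcomm.inv_right.mul_pow, inv_pow, ← hsq, mul_inv_cancel]
  have hat : a * t = j * (t * a) := by rw [hj]; group
  rw [← (commute_of_mul_eq_mul_mul hinj hρ (hinv j hjj) hjj hat).eq, mul_inv_cancel_right]

end RealCommutators

section Frobenius

open scoped Matrix.Norms.Frobenius

variable {m : Type*} [Fintype m]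

theorem frobenius_norm_sq_eq_re_trace (X : Matrix m m ℂ) : ‖X‖ ^ 2 = (trace (Xᴴ * X)).re := by
  rw [frobenius_norm_def, ← Real.sqrt_eq_rpow, Real.sq_sqrt (by positivity)]
  simp only [trace, diag, mul_apply, Complex.re_sum, conjTranspose_apply, Complex.star_def,
    ← Complex.normSq_eq_conj_mul_self, Complex.ofReal_re, Complex.normSq_eq_norm_sq,
    Real.rpow_two]
  exact Finset.sum_comm

theorem frobenius_norm_add_conjTranspose_sq (X : Matrix m m ℂ) :
    ‖X + Xᴴ‖ ^ 2 = 2 * ‖X‖ ^ 2 + 2 * (trace (X * X)).re := by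
  have hstar : (trace (Xᴴ * Xᴴ)).re = (trace (X * X)).re := by
    rw [← conjTranspose_mul, trace_conjTranspose, Complex.star_def, Complex.conj_re]
  simp only [frobenius_norm_sq_eq_re_trace, conjTranspose_add, conjTranspose_conjTranspose,
    add_mul, mul_add, trace_add, Complex.add_re, trace_mul_comm X Xᴴ, hstar]
  ring

variable [DecidableEq m]

theorem frobenius_norm_unitary_mul (U : unitaryGroup m ℂ) (X : Matrix m m ℂ) :
    ‖(U : Matrix m m ℂ) * X‖ = ‖X‖ := by
  rw [← sq_eq_sq₀ (norm_nonneg _) (norm_nonneg _), frobenius_norm_sq_eq_re_trace,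
    frobenius_norm_sq_eq_re_trace, conjTranspose_mul, mul_assoc, ← mul_assoc _ᴴ (U : Matrix m m ℂ),
    ← star_eq_conjTranspose (U : Matrix m m ℂ), Unitary.star_mul_self_of_mem U.2, one_mul]

theorem frobenius_norm_mul_unitary (X : Matrix m m ℂ) (U : unitaryGroup m ℂ) :
    ‖X * (U : Matrix m m ℂ)‖ = ‖X‖ := by
  rw [← frobenius_norm_conjTranspose, conjTranspose_mul, ← star_eq_conjTranspose (U : Matrix m m ℂ),
    ← Unitary.coe_star, frobenius_norm_unitary_mul, frobenius_norm_conjTranspose]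

theorem re_trace_mul_self_nonneg_of_spectrum_im_eq_zero {X : Matrix m m ℂ}
    (hX : ∀ z ∈ spectrum ℂ X, z.im = 0) : 0 ≤ (trace (X * X)).re := by
  have hroots : ∀ w ∈ (X * X).charpoly.roots, 0 ≤ w.re := by
    intro w hw
    have hw' : w ∈ spectrum ℂ (X ^ 2) :=
      sq X ▸ mem_spectrum_iff_isRoot_charpoly.2 (Polynomial.isRoot_of_mem_roots hw)
    rw [spectrum.map_pow_of_pos X two_pos] at hw'
    obtain ⟨z, hz, rfl⟩ := hw'
    simpa [sq, hX z hz] using mul_self_nonneg z.re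
  rw [trace_eq_sum_roots_charpoly, ← Complex.coe_reAddGroupHom, map_multiset_sum]
  exact Multiset.sum_nonneg (Multiset.forall_mem_map_iff.2 hroots)

theorem two_mul_frobenius_norm_sq_le {X : Matrix m m ℂ} (hX : ∀ z ∈ spectrum ℂ X, z.im = 0) :
    2 * ‖X‖ ^ 2 ≤ ‖X + Xᴴ‖ ^ 2 := by
  have := re_trace_mul_self_nonneg_of_spectrum_im_eq_zero hX
  rw [frobenius_norm_add_conjTranspose_sq]
  linarith

theorem frobenius_norm_sub_add_conjTranspose_le (P Q : unitaryGroup m ℂ) :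
    ‖(P - Q : Matrix m m ℂ) + (P - Q : Matrix m m ℂ)ᴴ‖ ≤
      (‖(P - 1 : Matrix m m ℂ)‖ + ‖(Q - 1 : Matrix m m ℂ)‖) * ‖(P - Q : Matrix m m ℂ)‖ := by
  have hconj : (P : Matrix m m ℂ) * (P - Q : Matrix m m ℂ)ᴴ * Q = -(P - Q : Matrix m m ℂ) := by
    rw [conjTranspose_sub, ← star_eq_conjTranspose, ← star_eq_conjTranspose, mul_sub, sub_mul,
      Unitary.mul_star_self_of_mem P.2, mul_assoc, Unitary.star_mul_self_of_mem Q.2, one_mul,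
      mul_one, neg_sub]
  calc ‖(P - Q : Matrix m m ℂ) + (P - Q : Matrix m m ℂ)ᴴ‖
    _ = ‖(P : Matrix m m ℂ) * ((P - Q : Matrix m m ℂ) + (P - Q : Matrix m m ℂ)ᴴ) * Q‖ := by
      rw [frobenius_norm_mul_unitary, frobenius_norm_unitary_mul]
    _ = ‖(P - 1 : Matrix m m ℂ) * (P - Q) * Q + (P - Q : Matrix m m ℂ) * (Q - 1)‖ := by
      rw [mul_add, add_mul, hconj]
      noncomm_ring
    _ ≤ ‖(P - 1 : Matrix m m ℂ) * (P - Q) * Q‖ + ‖(P - Q : Matrix m m ℂ) * (Q - 1)‖ :=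
      norm_add_le _ _
    _ ≤ ‖(P - 1 : Matrix m m ℂ)‖ * ‖(P - Q : Matrix m m ℂ)‖ +
        ‖(P - Q : Matrix m m ℂ)‖ * ‖(Q - 1 : Matrix m m ℂ)‖ := by
      rw [frobenius_norm_mul_unitary]
      exact add_le_add (norm_mul_le _ _) (norm_mul_le _ _)
    _ = _ := by ring

theorem eq_of_norm_sub_one_add_norm_sub_one_le_one {P Q : unitaryGroup m ℂ}
    (hPQ : ‖(P - 1 : Matrix m m ℂ)‖ + ‖(Q - 1 : Matrix m m ℂ)‖ ≤ 1)
    (hreal : ∀ z ∈ spectrum ℂ (P - Q : Matrix m m ℂ), z.im = 0) : P = Q := by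
  have hle : ‖(P - Q : Matrix m m ℂ) + (P - Q : Matrix m m ℂ)ᴴ‖ ≤ ‖(P - Q : Matrix m m ℂ)‖ :=
    (frobenius_norm_sub_add_conjTranspose_le P Q).trans
      (mul_le_of_le_one_left (norm_nonneg _) hPQ)
  have hsq := pow_le_pow_left₀ (norm_nonneg _) hle 2
  have htwo := two_mul_frobenius_norm_sq_le hreal
  have hzero : ‖(P - Q : Matrix m m ℂ)‖ ^ 2 = 0 :=
    le_antisymm (by linarith) (sq_nonneg _)
  exact Subtype.ext (sub_eq_zero.1 (norm_eq_zero.1 (pow_eq_zero_iff two_ne_zero |>.1 hzero)))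

end Frobenius

section FiniteIndex

open scoped Matrix.Norms.Frobenius

variable {m Γ : Type*} [Fintype m] [DecidableEq m] [Group Γ] {ρ : Γ →* unitaryGroup m ℂ}

theorem mem_center_of_frobenius_norm_sub_one_le (hinj : Function.Injective ρ)
    (hρ : HasRealCommutators ((unitaryGroup m ℂ).subtype.comp ρ)) {a : Γ}
    (ha : ‖(ρ a - 1 : Matrix m m ℂ)‖ ≤ 1 / 2) : a ∈ center Γ := by
  refine mem_center_iff.2 fun t ↦ ?_
  have hconj : ‖(ρ (t * a * t⁻¹) - 1 : Matrix m m ℂ)‖ = ‖(ρ a - 1 : Matrix m m ℂ)‖ :=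
    calc ‖(ρ (t * a * t⁻¹) - 1 : Matrix m m ℂ)‖
      _ = ‖(ρ t : Matrix m m ℂ) * (ρ a - 1) * (ρ t⁻¹ : unitaryGroup m ℂ)‖ := by
        rw [mul_sub, sub_mul, mul_one, ← Submonoid.coe_mul, ← Submonoid.coe_mul,
          ← Submonoid.coe_mul, ← map_mul, ← map_mul, ← map_mul, mul_inv_cancel, map_one,
          OneMemClass.coe_one]
      _ = ‖(ρ a - 1 : Matrix m m ℂ)‖ := by
        rw [frobenius_norm_mul_unitary, frobenius_norm_unitary_mul]
  have heq : a = t * a * t⁻¹ := hinj <| eq_of_norm_sub_one_add_norm_sub_one_le_one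
    (by linarith) (hρ.im_eq_zero_of_isConj (isConj_iff.2 ⟨t, rfl⟩))
  exact (eq_mul_inv_iff_mul_eq.1 heq).symm

theorem finiteIndex_center_of_compactSpace [TopologicalSpace Γ] [IsTopologicalGroup Γ]
    [CompactSpace Γ] (hcont : Continuous ρ) (hinj : Function.Injective ρ)
    (hρ : HasRealCommutators ((unitaryGroup m ℂ).subtype.comp ρ)) : (center Γ).FiniteIndex := by
  have hnhds : (center Γ : Set Γ) ∈ nhds 1 := by
    have hnorm : Continuous fun a ↦ ‖(ρ a - 1 : Matrix m m ℂ)‖ :=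
      ((continuous_subtype_val.comp hcont).sub continuous_const).norm
    have hone : ‖(ρ 1 - 1 : Matrix m m ℂ)‖ < 1 / 2 := by simp
    filter_upwards [hnorm.continuousAt.eventually_lt_const hone] with a ha
    exact mem_center_of_frobenius_norm_sub_one_le hinj hρ ha.le
  have := quotient_finite_of_isOpen _ (isOpen_of_mem_nhds _ hnhds)
  exact finiteIndex_of_finite_quotient

end FiniteIndex

section WeylTrick

open MeasureTheory
open scoped ComplexOrder Matrix.Norms.L2Operator

variable {m X : Type*} [Fintype m] [DecidableEq m]

/-- The functional `M ↦ v ⬝ᵥ M *ᵥ w` on matrices, bundled as a continuous linear map so that it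
commutes with integrals. -/
noncomputable def dotProductMulVecCLM (v w : m → ℂ) : Matrix m m ℂ →L[ℂ] ℂ :=
  LinearMap.toContinuousLinearMap
    { toFun M := v ⬝ᵥ M *ᵥ w
      map_add' M N := by rw [add_mulVec, dotProduct_add]
      map_smul' c M := by rw [smul_mulVec, dotProduct_smul, RingHom.id_apply] }

theorem isHermitian_integral [MeasurableSpace X] {μ : Measure X} {f : X → Matrix m m ℂ}
    (hf : ∀ x, (f x).IsHermitian) : (∫ x, f x ∂μ).IsHermitian := by
  have h := (starL' ℝ : Matrix m m ℂ ≃L[ℝ] Matrix m m ℂ).integral_comp_comm (μ := μ) f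
  simp only [starL'_apply, star_eq_conjTranspose, (hf _).eq] at h
  exact h.symm

theorem posDef_integral [MeasurableSpace X] {μ : Measure X} [NeZero μ] {f : X → Matrix m m ℂ}
    (hf : Integrable f μ) (hpos : ∀ x, (f x).PosDef) : (∫ x, f x ∂μ).PosDef := by
  have hH : (∫ x, f x ∂μ).IsHermitian := isHermitian_integral fun x ↦ (hpos x).isHermitian
  refine .of_dotProduct_mulVec_pos hH fun v hv ↦ ?_
  have hre (x : X) : 0 < RCLike.re (dotProductMulVecCLM (star v) v (f x)) :=
    (RCLike.pos_iff.1 ((hpos x).dotProduct_mulVec_pos hv)).1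
  have hint := (dotProductMulVecCLM (star v) v).integrable_comp hf
  refine RCLike.pos_iff.2 ⟨?_, hH.im_star_dotProduct_mulVec_self v⟩
  change 0 < RCLike.re (dotProductMulVecCLM (star v) v (∫ x, f x ∂μ))
  rw [← ContinuousLinearMap.integral_comp_comm _ hf, ← integral_re hint,
    integral_pos_iff_support_of_nonneg (fun x ↦ (hre x).le) hint.re,
    Function.support_eq_univ fun x ↦ (hre x).ne']
  exact Measure.measure_univ_pos.2 (NeZero.ne μ)

open scoped MatrixOrder in
theorem posDef_iff_exists_units_mul_conjTranspose {P : Matrix m m ℂ} :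
    P.PosDef ↔ ∃ Q : (Matrix m m ℂ)ˣ, P = Q * (Q : Matrix m m ℂ)ᴴ := by
  rw [← isStrictlyPositive_iff_posDef, CStarAlgebra.isStrictlyPositive_iff_eq_mul_star_self]
  exact ⟨fun ⟨Q, hQ, h⟩ ↦ ⟨hQ.unit, h⟩, fun ⟨Q, h⟩ ↦ ⟨Q, Q.isUnit, h⟩⟩

variable {Γ : Type*} [Group Γ] [TopologicalSpace Γ] [IsTopologicalGroup Γ] [CompactSpace Γ]

theorem exists_posDef_forall_mul_mul_conjTranspose_eq {φ : Γ →* Matrix m m ℂ}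
    (hφ : Continuous φ) :
    ∃ P : Matrix m m ℂ, P.PosDef ∧ ∀ g, φ g * P * (φ g)ᴴ = P := by
  let _ : MeasurableSpace Γ := borel Γ
  have : BorelSpace Γ := ⟨rfl⟩
  have hint : Integrable (fun g ↦ φ g * (φ g)ᴴ) (Measure.haar : Measure Γ) :=
    (hφ.mul hφ.matrix_conjTranspose).integrable_of_hasCompactSupport (.of_compactSpace _)
  refine ⟨∫ g, φ g * (φ g)ᴴ ∂Measure.haar, posDef_integral hint fun g ↦ ?_, fun h ↦ ?_⟩
  · exact posDef_iff_exists_units_mul_conjTranspose.2 ⟨φ.toHomUnits g, rfl⟩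
  · calc φ h * (∫ g, φ g * (φ g)ᴴ ∂Measure.haar) * (φ h)ᴴ
      _ = ∫ g, φ h * (φ g * (φ g)ᴴ) * (φ h)ᴴ ∂Measure.haar := by
        rw [integral_mul_const_of_integrable (hint.const_mul _),
          integral_const_mul_of_integrable hint]
      _ = ∫ g, φ (h * g) * (φ (h * g))ᴴ ∂Measure.haar := by
        simp only [map_mul, conjTranspose_mul, mul_assoc]
      _ = ∫ g, φ g * (φ g)ᴴ ∂Measure.haar :=
        integral_mul_left_eq_self (fun g ↦ φ g * (φ g)ᴴ) h

theorem exists_continuous_unitary_conj {φ : Γ →* Matrix m m ℂ} (hφ : Continuous φ) :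
    ∃ (Q : (Matrix m m ℂ)ˣ) (ρ : Γ →* unitaryGroup m ℂ), Continuous ρ ∧
      ∀ g, (ρ g : Matrix m m ℂ) = Q⁻¹.val * φ g * Q.val := by
  obtain ⟨P, hP, hinv⟩ := exists_posDef_forall_mul_mul_conjTranspose_eq hφ
  obtain ⟨Q, rfl⟩ := posDef_iff_exists_units_mul_conjTranspose.1 hP
  let σ : Γ →* Matrix m m ℂ :=
    (Units.coeHom _).comp ((MulAut.conj Q⁻¹).toMonoidHom.comp φ.toHomUnits)
  have hσ (g : Γ) : σ g = Q⁻¹.val * φ g * Q.val := by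
    simp [σ]
  have hunit (g : Γ) : σ g ∈ unitaryGroup m ℂ := by
    have hQ : Q.valᴴ * Q⁻¹.valᴴ = 1 := by
      rw [← conjTranspose_mul, Units.inv_mul, conjTranspose_one]
    rw [mem_unitaryGroup_iff, star_eq_conjTranspose]
    calc σ g * (σ g)ᴴ
      _ = Q⁻¹.val * (φ g * (Q.val * Q.valᴴ) * (φ g)ᴴ) * Q⁻¹.valᴴ := by
        simp only [hσ, conjTranspose_mul, mul_assoc]
      _ = 1 := by rw [hinv, ← mul_assoc, Units.inv_mul, one_mul, hQ]
  refine ⟨Q, σ.codRestrict _ hunit, .subtype_mk ?_ _, hσ⟩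
  exact ((continuous_const.mul hφ).mul continuous_const).congr fun g ↦ (hσ g).symm

end WeylTrick

section CompactGroup

theorem HasRealCommutators.of_conj {Γ A : Type*} [Group Γ] [Ring A] [Algebra ℂ A]
    {φ ψ : Γ →* A} (hφ : HasRealCommutators φ) {Q : Aˣ}
    (hψ : ∀ g, ψ g = Q⁻¹.val * φ g * Q.val) : HasRealCommutators ψ := by
  intro s t
  have h : ψ s * ψ t - ψ t * ψ s = Q⁻¹.val * (φ s * φ t - φ t * φ s) * Q.val := by
    rw [← map_mul, ← map_mul, hψ, hψ, map_mul, map_mul, mul_sub, sub_mul]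
  rw [h, spectrum.units_conjugate']
  exact hφ s t

variable {m Γ : Type*} [Fintype m] [DecidableEq m] [Group Γ] [TopologicalSpace Γ]
  [IsTopologicalGroup Γ] [CompactSpace Γ]

open scoped Matrix.Norms.L2Operator in
theorem center_eq_top_of_hasRealCommutators {ρ : Γ →* unitaryGroup m ℂ} (hcont : Continuous ρ)
    (hinj : Function.Injective ρ)
    (hρ : HasRealCommutators ((unitaryGroup m ℂ).subtype.comp ρ))
    (hinv : ∀ j : Γ, j ^ 2 = 1 → j ∈ center Γ) : center Γ = ⊤ := by
  have := finiteIndex_center_of_compactSpace hcont hinj hρ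
  exact center_eq_top_of_isConj_of_commute fun _ _ ↦ eq_of_isConj_of_commute hinj hρ hinv

theorem exists_sq_eq_one_notMem_center {φ : Γ →* Matrix m m ℂ} (hcont : Continuous φ)
    (hinj : Function.Injective φ) (hφ : HasRealCommutators φ) (hcenter : center Γ ≠ ⊤) :
    ∃ j : Γ, j ^ 2 = 1 ∧ j ∉ center Γ := by
  obtain ⟨Q, ρ, hρcont, hρ⟩ := exists_continuous_unitary_conj hcont
  have hρinj : Function.Injective ρ := fun a b hab ↦ by
    have h := congrArg Subtype.val hab
    rw [hρ, hρ, Q.mul_left_inj, Q⁻¹.mul_right_inj] at h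
    exact hinj h
  by_contra! hinv
  exact hcenter (center_eq_top_of_hasRealCommutators hρcont hρinj (hφ.of_conj hρ) hinv)

end CompactGroup

section MatGroup

variable {n : ℕ} {G : Set (Mat n)}

/-- A group of invertible matrices as a submonoid of the matrix ring; its group of units is the
group itself, as an abstract group. -/
def IsMatGroup.toSubmonoid (hG : IsMatGroup G) : Submonoid (Mat n) where
  carrier := G
  one_mem' := hG.1
  mul_mem' hA hB := hG.2.1 _ hA _ hB

theorem IsMatGroup.exists_mem_units_val_eq (hG : IsMatGroup G) {A : Mat n} (hA : A ∈ G) :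
    ∃ u : hG.toSubmonoid.units, u.1.val = A := by
  obtain ⟨⟨u, rfl⟩, huinv⟩ := hG.2.2 A hA
  rw [← coe_units_inv] at huinv
  exact ⟨⟨u, hA, huinv⟩, rfl⟩

end MatGroup

/-- A nonabelian compact matrix group all of whose ring commutators
have real spectra contains a noncentral involution. -/
theorem stmt19 {n : ℕ} (G : Set (Mat n))
    (hgrp : IsMatGroup G) (hcpt : IsCompact G)
    (hnonab : ∃ A ∈ G, ∃ B ∈ G, A * B ≠ B * A)
    (hcomm : ∀ A ∈ G, ∀ B ∈ G, RealSpectrum (A * B - B * A)) :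
    ∃ J ∈ G, J ^ 2 = 1 ∧ ∃ A ∈ G, J * A ≠ A * J := by
  let Γ := hgrp.toSubmonoid.units
  have : CompactSpace Γ := isCompact_iff_compactSpace.1 (Submonoid.units_isCompact hcpt)
  let φ : Γ →* Mat n := (Units.coeHom (Mat n)).comp Γ.subtype
  have hφ : Continuous φ := Units.continuous_val.comp continuous_subtype_val
  have hinj : Function.Injective φ := Units.val_injective.comp Subtype.val_injective
  have hreal : HasRealCommutators φ := fun s t ↦ hcomm _ s.2.1 _ t.2.1
  have hcenter : center Γ ≠ ⊤ := fun htop ↦ by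
    obtain ⟨A, hA, B, hB, hAB⟩ := hnonab
    obtain ⟨a, rfl⟩ := hgrp.exists_mem_units_val_eq hA
    obtain ⟨b, rfl⟩ := hgrp.exists_mem_units_val_eq hB
    exact hAB (congrArg φ (mem_center_iff.1 (htop ▸ mem_top b) a))
  obtain ⟨j, hjj, hj⟩ := exists_sq_eq_one_notMem_center hφ hinj hreal hcenter
  obtain ⟨a, ha⟩ := not_forall.1 (mt mem_center_iff.2 hj)
  refine ⟨φ j, j.2.1, by rw [← map_pow, hjj, map_one], φ a, a.2.1, fun h ↦ ha (hinj ?_)⟩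
  rw [map_mul, map_mul, h]
end
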